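/- arXiv:1703.06061 — 2 statements merged into one kernel-verified Lean document; each statement's English description precedes it below -/
import Mathlib

section
/- For every word w of length n over an alphabet of size k ≥ 2, the size g(w) of a smallest SLP for w is in O(n/log_k n), and there exist words of length n over a k-letter alphabet with g(w) ∈ Ω(n/log_k n). -/
/-- A straight-line program over alphabet `α`: nonterminals `0, ..., n-1`, each with a
single nonempty right-hand side referring only to smaller nonterminals (acyclicity). -/
structure SLP (α : Type) where
  n : ℕ
  rhs : Fin n → List (Fin n ⊕ α)
  start : Fin n
  dec : ∀ i j, Sum.inl j ∈ rhs i → (j : ℕ) < (i : ℕ)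
  ne : ∀ i, rhs i ≠ []

/-- The word derived by nonterminal `i`. -/
def SLP.val {α : Type} (G : SLP α) (i : Fin G.n) : List α :=
  ((G.rhs i).attach.map (fun s =>
    match h : s.1 with
    | Sum.inl j => G.val j
    | Sum.inr a => [a])).flatten
termination_by (i : ℕ)
decreasing_by exact G.dec i _ (h ▸ s.2)

/-- The size of an SLP: total length of all right-hand sides. -/
def SLP.size {α : Type} (G : SLP α) : ℕ := ∑ i, (G.rhs i).length

def SLP.produces {α : Type} (G : SLP α) (w : List α) : Prop := G.val G.start = w

/-- `gsize w` is the size of a smallest SLP producing `w`. -/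
noncomputable def gsize {α : Type} (w : List α) : ℕ :=
  sInf {s | ∃ G : SLP α, G.produces w ∧ G.size = s}

namespace SLP

variable {α : Type}

theorem val_eq (G : SLP α) (i : Fin G.n) :
    G.val i = ((G.rhs i).map (Sum.elim G.val fun a => [a])).flatten := by
  rw [SLP.val]
  congr 1
  conv_rhs => rw [← List.attach_map_subtype_val (G.rhs i), List.map_map]
  apply List.map_congr_left
  rintro ⟨s | a, hs⟩ -
  · rfl
  · rfl

theorem n_le_size (G : SLP α) : G.n ≤ G.size := by
  have h : ∑ _i : Fin G.n, 1 ≤ ∑ i, (G.rhs i).length :=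
    Finset.sum_le_sum fun i _ => List.length_pos_iff.2 (G.ne i)
  simpa [SLP.size] using h

theorem size_pos (G : SLP α) : 0 < G.size :=
  (Nat.zero_lt_of_lt G.start.isLt).trans_le G.n_le_size

/-- The SLP whose nonterminals derive the words of a dictionary `d` directly, with a start rule
concatenating dictionary words and letters. -/
def ofDictionary {m : ℕ} (d : Fin m → List α) (hd : ∀ i, d i ≠ []) (s : List (Fin m ⊕ α))
    (hs : s ≠ []) : SLP α where
  n := m + 1
  rhs := Fin.lastCases (s.map (Sum.map Fin.castSucc id)) fun i => (d i).map Sum.inr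
  start := Fin.last m
  dec i j := by
    refine Fin.lastCases ?_ (fun i => ?_) i
    · simp only [Fin.lastCases_last, List.mem_map]
      rintro ⟨x | x, -, h⟩
      · simp only [Sum.map_inl, Sum.inl.injEq] at h
        simp [← h]
      · simp at h
    · simp
  ne i := by
    refine Fin.lastCases ?_ (fun i => ?_) i
    · simpa using hs
    · simpa using hd i

theorem ofDictionary_produces {m : ℕ} (d : Fin m → List α) (hd : ∀ i, d i ≠ [])
    (s : List (Fin m ⊕ α)) (hs : s ≠ []) :
    (ofDictionary d hd s hs).produces (s.map (Sum.elim d fun a => [a])).flatten := by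
  have hval (i : Fin m) : (ofDictionary d hd s hs).val (Fin.castSucc i : Fin (m + 1)) = d i := by
    refine (val_eq _ _).trans ?_
    simp [ofDictionary, Function.comp_def, ← List.flatMap_def]
  rw [produces, val_eq]
  have hrhs : (ofDictionary d hd s hs).rhs (ofDictionary d hd s hs).start =
      s.map (Sum.map Fin.castSucc id) := by
    simp [ofDictionary]
  rw [hrhs]
  congr 1
  refine (List.map_map ..).trans (List.map_congr_left ?_)
  rintro (x | x) -
  · exact hval x
  · rfl

theorem ofDictionary_size {m : ℕ} (d : Fin m → List α) (hd : ∀ i, d i ≠ [])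
    (s : List (Fin m ⊕ α)) (hs : s ≠ []) :
    (ofDictionary d hd s hs).size = ∑ i, (d i).length + s.length := by
  change ∑ i : Fin (m + 1), _ = _
  rw [Fin.sum_univ_castSucc]
  simp [ofDictionary]

/-- Descriptions of SLPs of size `s`: the lengths of the right-hand sides, their concatenation, and
the start symbol. -/
abbrev Code (α : Type) (s : ℕ) : Type :=
  Composition s × List.Vector (Fin s ⊕ α) s × Fin s

/-- The right-hand sides, with nonterminals taken in a larger index range. -/
def rules (G : SLP α) {s : ℕ} (h : G.n ≤ s) : List (List (Fin s ⊕ α)) :=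
  List.ofFn fun i => (G.rhs i).map (Sum.map (Fin.castLE h) id)

theorem map_length_rules (G : SLP α) {s : ℕ} (h : G.n ≤ s) :
    (G.rules h).map List.length = List.ofFn fun i => (G.rhs i).length := by
  simp [rules, List.map_ofFn, Function.comp_def]

theorem sum_map_length_rules (G : SLP α) {s : ℕ} (h : G.n ≤ s) :
    ((G.rules h).map List.length).sum = G.size := by
  rw [map_length_rules, List.sum_ofFn, SLP.size]

theorem eq_of_rules_eq {G G' : SLP α} {s : ℕ} (h : G.n ≤ s) (h' : G'.n ≤ s)
    (hr : G.rules h = G'.rules h') (hs : (G.start : ℕ) = G'.start) : G = G' := by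
  obtain ⟨n, rhs, start, _, _⟩ := G
  obtain ⟨n', rhs', start', _, _⟩ := G'
  obtain rfl : n = n' := by simpa [rules] using congrArg List.length hr
  obtain rfl : start = start' := Fin.ext hs
  have hinj : Function.Injective (Sum.map (Fin.castLE h) (id : α → α)) :=
    Sum.map_injective.2 ⟨Fin.castLE_injective h, Function.injective_id⟩
  obtain rfl : rhs = rhs' := by
    funext i
    exact List.map_injective_iff.2 hinj (congrFun (List.ofFn_injective hr) i)
  rfl

/-- The description of an SLP. -/
def encode {s : ℕ} (G : {G : SLP α // G.size = s}) : Code α s :=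
  have h : G.1.n ≤ s := G.1.n_le_size.trans_eq G.2
  (⟨(G.1.rules h).map List.length,
      fun {i} hi => by
        rw [map_length_rules, List.mem_ofFn] at hi
        obtain ⟨j, rfl⟩ := hi
        exact List.length_pos_iff.2 (G.1.ne j),
      (sum_map_length_rules _ h).trans G.2⟩,
    ⟨(G.1.rules h).flatten, by rw [List.length_flatten, sum_map_length_rules, G.2]⟩,
    Fin.castLE h G.1.start)

theorem encode_injective (s : ℕ) :
    Function.Injective (encode : {G : SLP α // G.size = s} → Code α s) := by
  intro G G' h
  have hc := congrArg (fun c : Code α s => c.1.blocks) h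
  have hf := congrArg (fun c : Code α s => c.2.1.1) h
  have hs := congrArg (fun c : Code α s => (c.2.2 : ℕ)) h
  exact Subtype.ext (eq_of_rules_eq _ _ (List.eq_iff_flatten_eq.2 ⟨hf, hc⟩) hs)

end SLP

section gsize

variable {α : Type}

theorem SLP.produces.gsize_le {G : SLP α} {w : List α} (h : G.produces w) : gsize w ≤ G.size :=
  Nat.sInf_le ⟨G, h, rfl⟩

theorem gsize_le_of_dictionary {m : ℕ} (d : Fin m → List α) (hd : ∀ i, d i ≠ [])
    (s : List (Fin m ⊕ α)) (hs : s ≠ []) :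
    gsize (s.map (Sum.elim d fun a => [a])).flatten ≤ ∑ i, (d i).length + s.length :=
  SLP.ofDictionary_size d hd s hs ▸ (SLP.ofDictionary_produces d hd s hs).gsize_le

theorem exists_produces {w : List α} (hw : w ≠ []) :
    ∃ G : SLP α, G.produces w ∧ G.size ≤ w.length := by
  have hs : (w.map Sum.inr : List (Fin 0 ⊕ α)) ≠ [] := by simpa using hw
  refine ⟨SLP.ofDictionary Fin.elim0 (fun i => i.elim0) _ hs, ?_, ?_⟩
  · convert SLP.ofDictionary_produces Fin.elim0 (fun i => i.elim0) _ hs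
    simp [Function.comp_def, ← List.flatMap_def]
  · rw [SLP.ofDictionary_size]
    simp

theorem gsize_le_length {w : List α} (hw : w ≠ []) : gsize w ≤ w.length := by
  obtain ⟨G, hG, hsize⟩ := exists_produces hw
  exact hG.gsize_le.trans hsize

theorem exists_produces_size_eq_gsize {w : List α} (hw : w ≠ []) :
    ∃ G : SLP α, G.produces w ∧ G.size = gsize w := by
  obtain ⟨G, hG, -⟩ := exists_produces hw
  exact Nat.sInf_mem (s := {s | ∃ G : SLP α, G.produces w ∧ G.size = s}) ⟨_, G, hG, rfl⟩

theorem gsize_pos {w : List α} (hw : w ≠ []) : 0 < gsize w := by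
  obtain ⟨G, -, hG⟩ := exists_produces_size_eq_gsize hw
  exact hG ▸ G.size_pos

/-- Cut a word into dictionary blocks of length `l` and fewer than `l` remaining letters. -/
theorem exists_block_factorization {m l : ℕ} (hl : 0 < l) (d : Fin m → List α)
    (hd : ∀ u : List α, u.length = l → ∃ i, d i = u) (w : List α) :
    ∃ s : List (Fin m ⊕ α), (s.map (Sum.elim d fun a => [a])).flatten = w ∧
      l * s.length ≤ w.length + l * l := by
  by_cases hw : w.length < l
  · refine ⟨w.map Sum.inr, by simp [Function.comp_def, ← List.flatMap_def], ?_⟩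
    rw [List.length_map]
    nlinarith
  · obtain ⟨i, hi⟩ := hd (w.take l) (by simp; omega)
    obtain ⟨s, hs, hlen⟩ := exists_block_factorization hl d hd (w.drop l)
    refine ⟨Sum.inl i :: s, by simp [hs, hi], ?_⟩
    rw [List.length_drop] at hlen
    rw [List.length_cons, mul_add]
    omega
termination_by w.length
decreasing_by simp; omega

theorem mul_gsize_le {k l : ℕ} (hl : 0 < l) {w : List (Fin k)} (hw : w ≠ []) :
    l * gsize w ≤ w.length + l * l + l * l * k ^ l := by
  let d (i : Fin (k ^ l)) : List (Fin k) := List.ofFn (finFunctionFinEquiv.symm i)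
  have hlen (i) : (d i).length = l := by simp [d]
  have hd (u : List (Fin k)) (hu : u.length = l) : ∃ i, d i = u := by
    subst hu
    exact ⟨finFunctionFinEquiv u.get, by simp [d]⟩
  obtain ⟨s, rfl, hs⟩ := exists_block_factorization hl d hd w
  have hs' : s ≠ [] := by
    rintro rfl
    simp at hw
  have h := gsize_le_of_dictionary d (fun i => List.ne_nil_of_length_pos (by rw [hlen]; exact hl))
    s hs'
  simp only [hlen, Finset.sum_const, Finset.card_univ, Fintype.card_fin, smul_eq_mul] at h
  nlinarith [Nat.mul_le_mul_left l h]

theorem sq_le_two_mul_two_pow (l : ℕ) : l * l ≤ 2 * 2 ^ l := by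
  induction l with
  | zero => simp
  | succ l ih =>
    rcases lt_or_ge l 3 with h | h
    · interval_cases l <;> norm_num
    · rw [pow_succ]
      nlinarith

theorem gsize_mul_logb_le {k n : ℕ} (hk : 2 ≤ k) (hn : 0 < n) {w : List (Fin k)}
    (hw : w.length = n) : (gsize w : ℝ) * Real.logb k n ≤ 20 * n := by
  have hw0 : w ≠ [] := List.ne_nil_of_length_pos (hw ▸ hn)
  have hk1 : (1 : ℝ) < k := by exact_mod_cast hk
  have hn' : (0 : ℝ) < n := by exact_mod_cast hn
  have hlog : Real.logb k n ≤ (Nat.log k n + 1 : ℕ) := by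
    rw [Real.logb_le_iff_le_rpow hk1 hn', Real.rpow_natCast]
    exact_mod_cast (Nat.lt_pow_succ_log_self hk n).le
  suffices h : gsize w * (Nat.log k n + 1) ≤ 20 * n by
    calc (gsize w : ℝ) * Real.logb k n ≤ gsize w * (Nat.log k n + 1 : ℕ) := by gcongr
      _ ≤ 20 * n := by exact_mod_cast h
  obtain hl | hl := Nat.eq_zero_or_pos (Nat.log k n / 2)
  · have h1 : Nat.log k n + 1 ≤ 2 := by omega
    have h2 := gsize_le_length hw0
    nlinarith
  · set l := Nat.log k n / 2 with hl_def
    have hlog_le : Nat.log k n + 1 ≤ 4 * l := by omega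
    have hpow : k ^ l * k ^ l ≤ n := by
      rw [← pow_add]
      exact (Nat.pow_le_pow_right (by omega) (by omega)).trans (Nat.pow_log_le_self k hn.ne')
    have hsq : l * l ≤ 2 * k ^ l :=
      (sq_le_two_mul_two_pow l).trans (by gcongr)
    have hone : 1 ≤ k ^ l := Nat.one_le_pow _ _ (by omega)
    have h := mul_gsize_le hl hw0
    have h1 : l * l * k ^ l ≤ 2 * n := by nlinarith
    have h2 : l * l ≤ l * l * k ^ l := Nat.le_mul_of_pos_right _ hone
    calc gsize w * (Nat.log k n + 1) ≤ gsize w * (4 * l) := by gcongr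
      _ = 4 * (l * gsize w) := by ring
      _ ≤ 20 * n := by omega

theorem card_code_le (k s : ℕ) :
    Fintype.card (SLP.Code (Fin k) s) ≤ s * (2 * (s + k)) ^ s := by
  rw [Fintype.card_prod, Fintype.card_prod, composition_card, card_vector, Fintype.card_sum,
    Fintype.card_fin, Fintype.card_fin, mul_pow]
  calc 2 ^ (s - 1) * ((s + k) ^ s * s) ≤ 2 ^ s * ((s + k) ^ s * s) := by
        gcongr <;> omega
    _ = s * (2 ^ s * (s + k) ^ s) := by ring

/-- If all words of length `n` have SLPs of size at most `S`, there are few of them. -/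
theorem pow_le_of_forall_gsize_le {k n S : ℕ} (hn : 0 < n)
    (h : ∀ w : List (Fin k), w.length = n → gsize w ≤ S) :
    k ^ n ≤ (S + 1) * (S * (2 * (S + k)) ^ S) := by
  have hne (w : List.Vector (Fin k) n) : w.1 ≠ [] := List.ne_nil_of_length_pos (w.2.symm ▸ hn)
  choose G hG hsize using fun w : List.Vector (Fin k) n => exists_produces_size_eq_gsize (hne w)
  let f (w : List.Vector (Fin k) n) : Σ s : Fin (S + 1), {G : SLP (Fin k) // G.size = s} :=
    ⟨⟨gsize w.1, Nat.lt_succ_of_le (h _ w.2)⟩, G w, hsize w⟩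
  have hf : Function.Injective f := by
    intro w w' hw
    have hGG : G w = G w' :=
      congrArg (fun x : Σ s : Fin (S + 1), {G : SLP (Fin k) // G.size = s} => x.2.1) hw
    apply Subtype.ext
    rw [← hG w, ← hG w', hGG]
  have hinj := (Function.Injective.sigma_map (β₂ := fun s : Fin (S + 1) => SLP.Code (Fin k) s)
    (f₂ := fun _ => SLP.encode) Function.injective_id fun s => SLP.encode_injective s).comp hf
  have hcard := Fintype.card_le_of_injective _ hinj
  rw [card_vector, Fintype.card_fin, Fintype.card_sigma] at hcard
  refine hcard.trans ?_
  calc ∑ s : Fin (S + 1), Fintype.card (SLP.Code (Fin k) s)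
      ≤ ∑ _s : Fin (S + 1), S * (2 * (S + k)) ^ S := by
        refine Finset.sum_le_sum fun s _ => (card_code_le k s).trans ?_
        have hs : (s : ℕ) ≤ S := Nat.le_of_lt_succ s.isLt
        obtain h0 | h0 := Nat.eq_zero_or_pos (s : ℕ)
        · simp [h0]
        · exact Nat.mul_le_mul hs ((Nat.pow_le_pow_left (by omega) _).trans
            (Nat.pow_le_pow_right (by omega) hs))
    _ = (S + 1) * (S * (2 * (S + k)) ^ S) := by simp

theorem exists_le_gsize_mul_logb {k n : ℕ} (hk : 2 ≤ k) (hkn : k ≤ n) :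
    ∃ w : List (Fin k), w.length = n ∧ (n : ℝ) ≤ 9 * (gsize w : ℝ) * Real.logb k n := by
  have hn : 0 < n := by omega
  have : NeZero k := ⟨by omega⟩
  obtain ⟨⟨w, hw⟩, hmax⟩ := Finite.exists_max fun w : List.Vector (Fin k) n => gsize w.1
  refine ⟨w, hw, ?_⟩
  have hw0 : w ≠ [] := List.ne_nil_of_length_pos (hw ▸ hn)
  have hpos := gsize_pos hw0
  have hle : gsize w ≤ n := hw ▸ gsize_le_length hw0
  have hcount := pow_le_of_forall_gsize_le hn fun u hu => hmax ⟨u, hu⟩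
  simp only at hcount
  set S := gsize w
  have hcount' : k ^ n ≤ (4 * n) ^ (S + 2) := by
    calc k ^ n ≤ (S + 1) * (S * (2 * (S + k)) ^ S) := hcount
      _ ≤ (4 * n) * ((4 * n) * (4 * n) ^ S) := by
        have hbase : 2 * (S + k) ≤ 4 * n := by omega
        have hS : S ≤ 4 * n := by omega
        have hS1 : S + 1 ≤ 4 * n := by omega
        gcongr
      _ = (4 * n) ^ (S + 2) := by ring
  have hk1 : (1 : ℝ) < k := by exact_mod_cast hk
  have hk0 : (0 : ℝ) < k := by linarith
  have hn' : (0 : ℝ) < n := by exact_mod_cast hn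
  have hlogn : 1 ≤ Real.logb k n := by
    rw [Real.le_logb_iff_rpow_le hk1 hn', Real.rpow_one]
    exact_mod_cast hkn
  have hlog4 : Real.logb k 4 ≤ 2 := by
    rw [Real.logb_le_iff_le_rpow hk1 (by norm_num)]
    have : (2 : ℝ) ≤ k := by exact_mod_cast hk
    norm_num
    nlinarith
  have hreal : (k : ℝ) ^ n ≤ (4 * n) ^ (S + 2) := by exact_mod_cast hcount'
  have hlog := Real.logb_le_logb_of_le hk1 (by positivity) hreal
  rw [Real.logb_pow, Real.logb_pow, Real.logb_self_eq_one hk1, mul_one,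
    Real.logb_mul (by norm_num) hn'.ne'] at hlog
  have hS : (1 : ℝ) ≤ S := by exact_mod_cast hpos
  calc (n : ℝ) ≤ (S + 2 : ℕ) * (Real.logb k 4 + Real.logb k n) := hlog
    _ ≤ (3 * S) * (3 * Real.logb k n) := by
      refine mul_le_mul ?_ (by linarith) ?_ (by positivity)
      · push_cast
        linarith
      · have := Real.logb_nonneg hk1 (by norm_num : (1 : ℝ) ≤ 4)
        linarith
    _ = 9 * S * Real.logb k n := by ring

end gsize

/-- `g(k, n) ∈ Θ(n / log_k n)`: for every word `w` of length `n` over a `k`-letter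
alphabet, `g(w) ≤ C · n / log_k n`, and some word of length `n` over a `k`-letter
alphabet has `g(w) ≥ n / (C · log_k n)`. -/
theorem repair_stmt_1 :
    ∃ C : ℕ, 0 < C ∧ ∀ k n : ℕ, 2 ≤ k → k ≤ n →
      (∀ w : List (Fin k), w.length = n →
        (gsize w : ℝ) * Real.logb k n ≤ (C : ℝ) * n) ∧
      (∃ w : List (Fin k), w.length = n ∧
        (n : ℝ) ≤ (C : ℝ) * (gsize w : ℝ) * Real.logb k n) := by
  refine ⟨20, by norm_num, fun k n hk hkn => ⟨fun w hw => ?_, ?_⟩⟩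
  · exact_mod_cast gsize_mul_logb_le hk (by omega) hw
  · obtain ⟨w, hw, h⟩ := exists_le_gsize_mul_logb hk hkn
    have hlog : 0 ≤ Real.logb k n :=
      Real.logb_nonneg (by exact_mod_cast hk) (by exact_mod_cast (by omega : 1 ≤ n))
    refine ⟨w, hw, h.trans ?_⟩
    gcongr
    norm_num
end

section
/- The approximation ratio of the RePair grammar-based compressor on binary alphabets satisfies α_RePair(2,n) ∈ Ω(log n / log log n): there is an infinite family of binary words s_k with |s_k| = n ∈ Θ(4^k) such that g(s_k) ∈ O(k) while the SLP output by RePair on s_k has size Ω(k²/log k). -/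
/-- Symbols appearing in RePair's grammars: nonterminals (numbered) or terminals. -/
abbrev RSym (α : Type) := ℕ ⊕ α

/-- A grammar in RePair's working representation: the list of right-hand sides, where the
rule at position `i` is the rule of nonterminal `i` and the start nonterminal is `0`. -/
abbrev Grammar (α : Type) := List (List (RSym α))

def countNOAux {σ : Type} [DecidableEq σ] (γ : List σ) : ℕ → List σ → ℕ
  | 0, _ => 0
  | fuel + 1, w =>
    if w = [] then 0
    else if γ <+: w then 1 + countNOAux γ fuel (w.drop γ.length)
    else countNOAux γ fuel w.tail

/-- The maximal number of pairwise non-overlapping occurrences of `γ` (with `|γ| ≥ 1`)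
in `w`, computed by the left-to-right greedy strategy. -/
def countNO {σ : Type} [DecidableEq σ] (γ w : List σ) : ℕ := countNOAux γ w.length w

def replaceNOAux {σ : Type} [DecidableEq σ] (γ : List σ) (X : σ) : ℕ → List σ → List σ
  | 0, w => w
  | _ + 1, [] => []
  | fuel + 1, s :: tl =>
    if γ <+: (s :: tl) then X :: replaceNOAux γ X fuel ((s :: tl).drop γ.length)
    else s :: replaceNOAux γ X fuel tl

/-- Replace the non-overlapping occurrences of `γ` in `w`, left to right, by `X`. -/
def replaceNO {σ : Type} [DecidableEq σ] (γ : List σ) (X : σ) (w : List σ) : List σ :=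
  replaceNOAux γ X w.length w

/-- The number of pairwise non-overlapping occurrences of `γ` in the right-hand sides. -/
def freq {α : Type} [DecidableEq α] (G : Grammar α) (γ : List (RSym α)) : ℕ :=
  (G.map (countNO γ)).sum

/-- `γ` is a maximal string of `G`: it has length at least two, occurs at least twice
without overlap, and no strictly longer word occurs at least as many times. -/
def IsMaxStr {α : Type} [DecidableEq α] (G : Grammar α) (γ : List (RSym α)) : Prop :=
  2 ≤ γ.length ∧ 2 ≤ freq G γ ∧ ∀ δ, γ.length < δ.length → freq G δ < freq G γ

/-- One round of RePair: pick a most frequent maximal string `γ`, replace its occurrences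
left to right by the fresh nonterminal `G.length`, and append the new rule `X → γ`. -/
def RePairStep {α : Type} [DecidableEq α] (G G' : Grammar α) : Prop :=
  ∃ γ, IsMaxStr G γ ∧ (∀ δ, IsMaxStr G δ → freq G δ ≤ freq G γ) ∧
    G' = (G.map (fun r => replaceNO γ (Sum.inl G.length) r)) ++ [γ]

/-- `RePairSteps r G G'`: `G'` is obtained from `G` by `r` rounds of RePair. -/
inductive RePairSteps {α : Type} [DecidableEq α] : ℕ → Grammar α → Grammar α → Prop
  | refl (G) : RePairSteps 0 G G
  | tail {n : ℕ} {G₁ G₂ G₃ : Grammar α} :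
      RePairSteps n G₁ G₂ → RePairStep G₂ G₃ → RePairSteps (n + 1) G₁ G₃

/-- The initial grammar `S → w`. -/
def RePairInit {α : Type} (w : List α) : Grammar α := [w.map Sum.inr]

/-- `G` is an output of RePair on input `w`: reachable from `S → w` by rounds of RePair,
with no maximal string left. -/
def RePairRun {α : Type} [DecidableEq α] (w : List α) (G : Grammar α) : Prop :=
  (∃ n, RePairSteps n (RePairInit w) G) ∧ ∀ γ, ¬ IsMaxStr G γ

/-- The size of a grammar: total length of all right-hand sides. -/
def gramSize {α : Type} (G : Grammar α) : ℕ := (G.map List.length).sum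

section Greedy

variable {σ : Type} [DecidableEq σ]

lemma countNOAux_congr {γ : List σ} (hγ : γ ≠ []) :
    ∀ (m n : ℕ) (w : List σ), w.length ≤ m → w.length ≤ n →
      countNOAux γ m w = countNOAux γ n w
  | 0, 0, _, _, _ => rfl
  | 0, n + 1, w, hm, _ => by
    have : w = [] := by simpa using hm
    simp [countNOAux, this]
  | m + 1, 0, w, _, hn => by
    have : w = [] := by simpa using hn
    simp [countNOAux, this]
  | m + 1, n + 1, w, hm, hn => by
    have h0 : 0 < γ.length := List.length_pos_iff.2 hγ
    unfold countNOAux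
    split_ifs with h1 h2
    · rfl
    · have hw : 0 < w.length := List.length_pos_iff.2 h1
      rw [countNOAux_congr hγ m n _ (by simp; omega) (by simp; omega)]
    · exact countNOAux_congr hγ m n _ (by simp; omega) (by simp; omega)

lemma replaceNOAux_congr {γ : List σ} (hγ : γ ≠ []) (X : σ) :
    ∀ (m n : ℕ) (w : List σ), w.length ≤ m → w.length ≤ n →
      replaceNOAux γ X m w = replaceNOAux γ X n w
  | 0, 0, _, _, _ => rfl
  | 0, n + 1, w, hm, _ => by
    have : w = [] := by simpa using hm
    simp [replaceNOAux, this]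
  | m + 1, 0, w, _, hn => by
    have : w = [] := by simpa using hn
    simp [replaceNOAux, this]
  | m + 1, n + 1, [], hm, hn => rfl
  | m + 1, n + 1, s :: tl, hm, hn => by
    have h0 : 0 < γ.length := List.length_pos_iff.2 hγ
    simp only [List.length_cons] at hm hn
    unfold replaceNOAux
    split_ifs with h1
    · rw [replaceNOAux_congr hγ X m n _ (by simp; omega) (by simp; omega)]
    · rw [replaceNOAux_congr hγ X m n _ (by omega) (by omega)]

@[simp] lemma countNO_nil (γ : List σ) : countNO γ [] = 0 := rfl

@[simp] lemma replaceNO_nil (γ : List σ) (X : σ) : replaceNO γ X [] = [] := rfl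

lemma countNO_append {γ : List σ} (hγ : γ ≠ []) (v : List σ) :
    countNO γ (γ ++ v) = countNO γ v + 1 := by
  have h0 : 0 < γ.length := List.length_pos_iff.2 hγ
  obtain ⟨n, hn⟩ : ∃ n, (γ ++ v).length = n + 1 :=
    ⟨(γ ++ v).length - 1, by simp only [List.length_append]; omega⟩
  have hv : v.length ≤ n := by simp only [List.length_append] at hn; omega
  rw [countNO, hn, countNOAux, if_neg (by simp [hγ]), if_pos (List.prefix_append _ _),
    List.drop_left, countNOAux_congr hγ n v.length v hv le_rfl, add_comm]
  rfl

lemma countNO_cons_of_not_prefix {γ : List σ} {s : σ} {tl : List σ}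
    (h : ¬ γ <+: s :: tl) : countNO γ (s :: tl) = countNO γ tl := by
  simp [countNO, countNOAux, h]

lemma replaceNO_append {γ : List σ} (hγ : γ ≠ []) (X : σ) (v : List σ) :
    replaceNO γ X (γ ++ v) = X :: replaceNO γ X v := by
  obtain ⟨c, γ', rfl⟩ := List.exists_cons_of_ne_nil hγ
  rw [replaceNO, List.cons_append, List.length_cons, replaceNOAux,
    if_pos (by simp), ← List.cons_append, List.drop_left,
    replaceNOAux_congr hγ X _ v.length v (by simp) le_rfl]
  rfl

lemma replaceNO_cons_of_not_prefix {γ : List σ} (X : σ) {s : σ} {tl : List σ}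
    (h : ¬ γ <+: s :: tl) : replaceNO γ X (s :: tl) = s :: replaceNO γ X tl := by
  simp [replaceNO, replaceNOAux, h]

/-- Induction along the left-to-right scan for non-overlapping occurrences of `γ`. -/
lemma scan_induction {γ : List σ} (hγ : γ ≠ []) {p : List σ → Prop} (nil : p [])
    (hit : ∀ v, p v → p (γ ++ v))
    (miss : ∀ s tl, ¬ γ <+: s :: tl → p tl → p (s :: tl)) (w : List σ) : p w := by
  induction hn : w.length using Nat.strong_induction_on generalizing w with
  | _ n ih =>
    subst hn
    by_cases h : γ <+: w
    · obtain ⟨v, rfl⟩ := h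
      have h0 : 0 < γ.length := List.length_pos_iff.2 hγ
      exact hit v (ih _ (by simp only [List.length_append]; omega) v rfl)
    · cases w with
      | nil => exact nil
      | cons s tl => exact miss s tl h (ih _ (by simp) tl rfl)

lemma countNO_mul_countP_le {γ : List σ} (hγ : γ ≠ []) (p : σ → Bool) (w : List σ) :
    countNO γ w * γ.countP p ≤ w.countP p := by
  induction w using scan_induction hγ with
  | nil => simp
  | hit v ih => rw [countNO_append hγ, List.countP_append]; linarith
  | miss s tl h ih =>
    rw [countNO_cons_of_not_prefix h]
    exact ih.trans (List.sublist_cons_self s tl).countP_le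

lemma length_replaceNO {γ : List σ} (hγ : γ ≠ []) (X : σ) (w : List σ) :
    (replaceNO γ X w).length + countNO γ w * γ.length = w.length + countNO γ w := by
  induction w using scan_induction hγ with
  | nil => simp
  | hit v ih =>
    rw [countNO_append hγ, replaceNO_append hγ, List.length_append, List.length_cons]
    linarith
  | miss s tl h ih =>
    rw [countNO_cons_of_not_prefix h, replaceNO_cons_of_not_prefix X h, List.length_cons,
      List.length_cons]
    linarith

lemma countNO_le_length {γ : List σ} (hγ : γ ≠ []) (w : List σ) :
    countNO γ w ≤ w.length := by
  induction w using scan_induction hγ with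
  | nil => simp
  | hit v ih =>
    have h0 : 0 < γ.length := List.length_pos_iff.2 hγ
    rw [countNO_append hγ, List.length_append]; omega
  | miss s tl h ih =>
    rw [countNO_cons_of_not_prefix h, List.length_cons]; omega

lemma replaceNO_ne_nil {γ : List σ} (hγ : γ ≠ []) (X : σ) {w : List σ} (hw : w ≠ []) :
    replaceNO γ X w ≠ [] := by
  induction w using scan_induction hγ with
  | nil => exact absurd rfl hw
  | hit v ih => simp [replaceNO_append hγ]
  | miss s tl h ih => simp [replaceNO_cons_of_not_prefix X h]

lemma mem_replaceNO {γ : List σ} (hγ : γ ≠ []) {X s : σ} {w : List σ}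
    (h : s ∈ replaceNO γ X w) : s = X ∨ s ∈ w := by
  induction w using scan_induction hγ with
  | nil => simp at h
  | hit v ih =>
    rw [replaceNO_append hγ, List.mem_cons] at h
    grind
  | miss s tl hs ih =>
    rw [replaceNO_cons_of_not_prefix X hs, List.mem_cons] at h
    grind

lemma replaceNO_of_not_mem {γ : List σ} (X : σ) {y : σ} (hy : y ∈ γ) {w : List σ}
    (h : y ∉ w) : replaceNO γ X w = w := by
  have hγ : γ ≠ [] := List.ne_nil_of_mem hy
  induction w using scan_induction hγ with
  | nil => simp
  | hit v ih => simp [hy] at h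
  | miss s tl hs ih =>
    rw [replaceNO_cons_of_not_prefix X hs, ih (fun h' => h (List.mem_cons_of_mem _ h'))]

lemma flatMap_replaceNO {τ : Type} {γ : List σ} (hγ : γ ≠ []) {X : σ} {e e' : σ → List τ}
    (hX : e' X = γ.flatMap e) {w : List σ} (h : ∀ s ∈ w, e' s = e s) :
    (replaceNO γ X w).flatMap e' = w.flatMap e := by
  induction w using scan_induction hγ with
  | nil => simp
  | hit v ih =>
    rw [replaceNO_append hγ, List.flatMap_cons, List.flatMap_append, hX,
      ih (fun s hs => h s (List.mem_append_right _ hs))]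
  | miss s tl hs ih =>
    rw [replaceNO_cons_of_not_prefix X hs, List.flatMap_cons, List.flatMap_cons,
      h s List.mem_cons_self, ih (fun s hs => h s (List.mem_cons_of_mem _ hs))]

lemma exists_append_of_countNO_pos {γ : List σ} (hγ : γ ≠ []) {w : List σ}
    (h : 1 ≤ countNO γ w) : ∃ A B, w = A ++ γ ++ B ∧ countNO γ w ≤ countNO γ B + 1 := by
  induction w using scan_induction hγ with
  | nil => simp at h
  | hit v ih => exact ⟨[], v, by simp, (countNO_append hγ v).le⟩
  | miss s tl hs ih =>
    rw [countNO_cons_of_not_prefix hs] at h ⊢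
    obtain ⟨A, B, h1, h2⟩ := ih h
    exact ⟨s :: A, B, by simp [h1], h2⟩

lemma exists_append_of_two_le_countNO {γ : List σ} (hγ : γ ≠ []) {w : List σ}
    (h : 2 ≤ countNO γ w) : ∃ A B C, w = A ++ γ ++ B ++ γ ++ C := by
  obtain ⟨A, D, rfl, h2⟩ := exists_append_of_countNO_pos hγ (by omega : 1 ≤ countNO γ w)
  obtain ⟨B, C, rfl, -⟩ := exists_append_of_countNO_pos hγ (by omega : 1 ≤ countNO γ D)
  exact ⟨A, B, C, by simp⟩

lemma replaceNO_pair_replicate_append {x : σ} (X : σ) (n : ℕ) {v : List σ}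
    (hv : x ∉ v) :
    replaceNO [x, x] X (List.replicate n x ++ v) =
      List.replicate (n / 2) X ++ List.replicate (n % 2) x ++ v := by
  have hpair : ([x, x] : List σ) ≠ [] := by simp
  induction n using Nat.twoStepInduction with
  | zero => simpa using replaceNO_of_not_mem X (by simp) hv
  | one =>
    have hnp : ¬ [x, x] <+: x :: v := by
      rintro ⟨t, ht⟩
      simp at ht
      exact hv (ht ▸ by simp)
    simp [replaceNO_cons_of_not_prefix X hnp,
      replaceNO_of_not_mem (γ := [x, x]) X (by simp) hv]
  | more n ih _ =>
    have : List.replicate (n + 2) x ++ v = [x, x] ++ (List.replicate n x ++ v) := by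
      simp [List.replicate_succ]
    rw [this, replaceNO_append hpair, ih, show (n + 2) / 2 = n / 2 + 1 by omega,
      show (n + 2) % 2 = n % 2 by omega, List.replicate_succ]
    simp

lemma replaceNO_pair_append {x y : σ} (X : σ) (hxy : y ≠ x) (u v : List σ) :
    replaceNO [x, x] X (u ++ y :: v) = replaceNO [x, x] X u ++ y :: replaceNO [x, x] X v := by
  have hpair : ([x, x] : List σ) ≠ [] := by simp
  induction u using scan_induction hpair with
  | nil =>
    rw [List.nil_append, replaceNO_cons_of_not_prefix, replaceNO_nil, List.nil_append]
    rintro ⟨t, ht⟩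
    simp at ht
    exact hxy ht.1.symm
  | hit u ih =>
    rw [List.append_assoc, replaceNO_append hpair, replaceNO_append hpair, ih, List.cons_append]
  | miss s tl hs ih =>
    rw [replaceNO_cons_of_not_prefix X hs, List.cons_append, replaceNO_cons_of_not_prefix, ih,
      List.cons_append]
    rintro ⟨t, ht⟩
    simp at ht
    obtain ⟨rfl, ht⟩ := ht
    cases tl with
    | nil => simp at ht; exact hxy ht.1.symm
    | cons z tl =>
      simp at ht
      obtain ⟨rfl, -⟩ := ht
      exact hs ⟨tl, by simp⟩

lemma le_countNO_pair_replicate_append (x : σ) (n : ℕ) (v : List σ) :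
    n / 2 ≤ countNO [x, x] (List.replicate n x ++ v) := by
  induction n using Nat.twoStepInduction with
  | zero => simp
  | one => simp
  | more n ih _ =>
    have : List.replicate (n + 2) x ++ v = [x, x] ++ (List.replicate n x ++ v) := by
      simp [List.replicate_succ]
    rw [this, countNO_append (by simp)]
    omega

end Greedy

lemma length_le_gramSize {α : Type} {G : Grammar α} (h : ∀ r ∈ G, r ≠ []) :
    G.length ≤ gramSize G := by
  induction G with
  | nil => simp
  | cons r G ih =>
    have h1 := List.length_pos_iff.2 (h r List.mem_cons_self)
    have h2 := ih (fun r hr => h r (List.mem_cons_of_mem _ hr))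
    simp only [gramSize, List.map_cons, List.sum_cons, List.length_cons] at h2 ⊢
    omega

section Grammars

variable {α : Type} [DecidableEq α]

lemma freq_cons (r : List (RSym α)) (G : Grammar α) (γ : List (RSym α)) :
    freq (r :: G) γ = countNO γ r + freq G γ := by
  simp [freq]

lemma freq_mul_countP_le {γ : List (RSym α)} (hγ : γ ≠ []) (p : RSym α → Bool)
    (G : Grammar α) : freq G γ * γ.countP p ≤ G.flatten.countP p := by
  induction G with
  | nil => simp [freq]
  | cons r G ih =>
    rw [freq_cons, List.flatten_cons, List.countP_append, add_mul]
    exact add_le_add (countNO_mul_countP_le hγ p r) ih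

lemma freq_le_gramSize {γ : List (RSym α)} (hγ : γ ≠ []) (G : Grammar α) :
    freq G γ ≤ gramSize G := by
  induction G with
  | nil => simp [freq]
  | cons r G ih =>
    rw [freq_cons, gramSize, List.map_cons, List.sum_cons]
    exact add_le_add (countNO_le_length hγ r) ih

lemma gramSize_map_replaceNO {γ : List (RSym α)} (hγ : γ ≠ []) (X : RSym α) (G : Grammar α) :
    gramSize (G.map (replaceNO γ X)) + freq G γ * γ.length = gramSize G + freq G γ := by
  induction G with
  | nil => simp [freq, gramSize]
  | cons r G ih =>
    have := length_replaceNO hγ X r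
    simp only [freq_cons, gramSize, List.map_cons, List.sum_cons] at ih ⊢
    linarith

lemma IsMaxStr.ne_nil {G : Grammar α} {γ : List (RSym α)} (h : IsMaxStr G γ) : γ ≠ [] := by
  rintro rfl
  simpa using h.1

lemma exists_rePairStep {G : Grammar α} {γ : List (RSym α)} (h : IsMaxStr G γ) :
    ∃ G', RePairStep G G' := by
  obtain ⟨m, ⟨γ', h1, rfl⟩, h2⟩ : ∃ m ∈ {m | ∃ γ, IsMaxStr G γ ∧ freq G γ = m},
      ∀ m' ∈ {m | ∃ γ, IsMaxStr G γ ∧ freq G γ = m}, m' ≤ m := by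
    have hb : BddAbove {m | ∃ γ, IsMaxStr G γ ∧ freq G γ = m} :=
      ⟨gramSize G, by rintro _ ⟨δ, hδ, rfl⟩; exact freq_le_gramSize hδ.ne_nil G⟩
    have hne : {m | ∃ γ, IsMaxStr G γ ∧ freq G γ = m}.Nonempty := ⟨_, γ, h, rfl⟩
    exact ⟨_, Nat.sSup_mem hne hb, fun m' hm' => le_csSup hb hm'⟩
  exact ⟨_, γ', h1, fun δ hδ => h2 _ ⟨δ, hδ, rfl⟩, rfl⟩

lemma RePairStep.ne_nil {G G' : Grammar α} (h : RePairStep G G') (hG : ∀ r ∈ G, r ≠ []) :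
    ∀ r ∈ G', r ≠ [] := by
  obtain ⟨γ, hγ, -, rfl⟩ := h
  intro r hr
  simp only [List.mem_append, List.mem_map, List.mem_singleton] at hr
  rcases hr with ⟨r', hr', rfl⟩ | rfl
  · exact replaceNO_ne_nil hγ.ne_nil _ (hG r' hr')
  · exact hγ.ne_nil

lemma RePairStep.gramSize_le {G G' : Grammar α} (h : RePairStep G G') :
    gramSize G' ≤ gramSize G := by
  obtain ⟨γ, hγ, -, rfl⟩ := h
  have h1 := gramSize_map_replaceNO hγ.ne_nil (Sum.inl G.length) G
  have h2 : gramSize (G.map (fun r => replaceNO γ (Sum.inl G.length) r) ++ [γ]) =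
      gramSize (G.map (replaceNO γ (Sum.inl G.length))) + γ.length := by
    simp [gramSize]
  rw [h2]
  have h3 := hγ.1
  have h4 := hγ.2.1
  nlinarith

lemma RePairStep.length_eq {G G' : Grammar α} (h : RePairStep G G') :
    G'.length = G.length + 1 := by
  obtain ⟨γ, -, -, rfl⟩ := h
  simp

lemma exists_rePairSteps_terminal (G : Grammar α) (hG : ∀ r ∈ G, r ≠ []) {n : ℕ}
    {G₀ : Grammar α} (h : RePairSteps n G₀ G) :
    ∃ n' G', RePairSteps n' G₀ G' ∧ ∀ γ, ¬ IsMaxStr G' γ := by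
  induction hm : 2 * gramSize G - G.length using Nat.strong_induction_on generalizing G n with
  | _ m ih =>
    by_cases hex : ∃ γ, IsMaxStr G γ
    · obtain ⟨γ, hγ⟩ := hex
      obtain ⟨G', hG'⟩ := exists_rePairStep hγ
      have h1 := hG'.gramSize_le
      have h2 := hG'.length_eq
      have h3 := length_le_gramSize (hG'.ne_nil hG)
      exact ih _ (by omega) G' (hG'.ne_nil hG) (h.tail hG') rfl
    · exact ⟨n, G, h, fun γ hγ => hex ⟨γ, hγ⟩⟩

lemma exists_rePairRun {w : List α} (hw : w ≠ []) : ∃ G, RePairRun w G := by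
  obtain ⟨n, G, h1, h2⟩ := exists_rePairSteps_terminal (RePairInit w)
    (by simpa [RePairInit] using hw) (RePairSteps.refl _)
  exact ⟨G, ⟨n, h1⟩, h2⟩

lemma RePairStep.eq_of_freq_lt {G G' : Grammar α} {γ : List (RSym α)} (hγ : γ.length = 2)
    (hfreq : 2 ≤ freq G γ) (hlt : ∀ δ, 2 ≤ δ.length → δ ≠ γ → freq G δ < freq G γ)
    (h : RePairStep G G') :
    G' = G.map (replaceNO γ (Sum.inl G.length)) ++ [γ] := by
  obtain ⟨δ, hδ, hbest, rfl⟩ := h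
  have hmax : IsMaxStr G γ :=
    ⟨hγ.ge, hfreq, fun δ hδ => hlt δ (by omega) (by rintro rfl; omega)⟩
  obtain rfl : δ = γ := by
    by_contra hne
    exact absurd (hbest γ hmax) (not_le.2 (hlt δ hδ.1 hne))
  rfl

end Grammars

section Segments

variable {σ : Type} (p : σ → Bool)

/-- The maximal factors of a word that start with a letter satisfying `p` and contain no
other such letter. -/
def segments : List σ → List (List σ)
  | [] => []
  | x :: t => if p x then (x :: t.takeWhile (fun y => !p y)) :: segments t else segments t

lemma length_segments (w : List σ) : (segments p w).length = w.countP p := by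
  induction w with
  | nil => rfl
  | cons x t ih => by_cases h : p x <;> simp [segments, h, ih]

variable {p}

lemma segments_append_of_forall {u : List σ} (h : ∀ x ∈ u, p x = false) (v : List σ) :
    segments p (u ++ v) = segments p v := by
  induction u with
  | nil => rfl
  | cons x t ih =>
    rw [List.cons_append, segments, if_neg (by simp [h x]),
      ih (fun y hy => h y (List.mem_cons_of_mem _ hy))]

lemma segments_eq_nil {w : List σ} (h : ∀ x ∈ w, p x = false) : segments p w = [] := by
  simpa [segments] using segments_append_of_forall h []

lemma segments_append_cons {x : σ} (hx : p x) (u v : List σ) :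
    segments p (u ++ x :: v) = segments p u ++ segments p (x :: v) := by
  induction u with
  | nil => rfl
  | cons y u ih =>
    have h : (u ++ x :: v).takeWhile (fun y => !p y) = u.takeWhile (fun y => !p y) := by
      clear ih
      induction u with
      | nil => simp [hx]
      | cons z u ih => by_cases hz : p z <;> simp [hz, ih]
    rw [List.cons_append, segments, segments, h, ih]
    split_ifs <;> simp

lemma segments_cons_of_forall {x : σ} (hx : p x) {u : List σ} (hu : ∀ y ∈ u, p y = false) :
    segments p (x :: u) = [x :: u] := by
  rw [segments, if_pos hx, segments_eq_nil hu, List.takeWhile_eq_self_iff.2]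
  simpa using hu

lemma segments_flatten {cs : List (List σ)}
    (h : ∀ c ∈ cs, ∃ x u, c = x :: u ∧ p x ∧ ∀ y ∈ u, p y = false) :
    segments p cs.flatten = cs := by
  induction cs with
  | nil => rfl
  | cons c cs ih =>
    have ih := ih (fun d hd => h d (List.mem_cons_of_mem _ hd))
    obtain ⟨x, u, rfl, hx, hu⟩ := h c List.mem_cons_self
    cases cs with
    | nil => simp [segments_cons_of_forall hx hu]
    | cons d cs =>
      obtain ⟨y, v, rfl, hy, hv⟩ := h d (by simp)
      have e : ((y :: v) :: cs).flatten = y :: (v ++ cs.flatten) := by simp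
      rw [List.flatten_cons, e, segments_append_cons hy, segments_cons_of_forall hx hu, ← e, ih]
      simp

lemma exists_append_of_two_le_countP {w : List σ} (h : 2 ≤ w.countP p) :
    ∃ A x u y B, w = A ++ (x :: u) ++ y :: B ∧ p x ∧ p y ∧ ∀ z ∈ u, p z = false := by
  induction w with
  | nil => simp at h
  | cons x t ih =>
    by_cases h2 : 2 ≤ t.countP p
    · obtain ⟨A, x', u, y, B, rfl, h'⟩ := ih h2
      exact ⟨x :: A, x', u, y, B, by simp, h'⟩
    · have hx : p x := by
        by_contra hx
        simp [hx] at h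
        omega
      have hpos : 0 < t.countP p := by
        simp [hx] at h
        simpa using h
      clear ih h h2
      have : ∃ u y B, t = u ++ y :: B ∧ p y ∧ ∀ z ∈ u, p z = false := by
        induction t with
        | nil => simp at hpos
        | cons y t ih =>
          by_cases hy : p y
          · exact ⟨[], y, t, by simp, hy, by simp⟩
          · obtain ⟨u, y', B, rfl, h1, h2⟩ := ih (by simpa [hy] using hpos)
            exact ⟨y :: u, y', B, by simp, h1, by simpa [hy] using h2⟩
      obtain ⟨u, y, B, rfl, hy, hu⟩ := this
      exact ⟨[], x, u, y, B, by simp, hx, hy, hu⟩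

lemma countP_le_one_of_nodup_segments {A δ B C : List σ}
    (h : (segments p (A ++ δ ++ B ++ δ ++ C)).Nodup) : δ.countP p ≤ 1 := by
  by_contra! hδ
  obtain ⟨D, x, u, y, E, rfl, hx, hy, hu⟩ := exists_append_of_two_le_countP hδ
  have key : ∀ F G, segments p (F ++ (x :: u) ++ y :: G) =
      segments p F ++ [x :: u] ++ segments p (y :: G) := fun F G => by
    rw [segments_append_cons hy, List.append_cons, List.append_assoc, List.singleton_append,
      segments_append_cons hx, segments_cons_of_forall hx hu]
  have e : A ++ (D ++ (x :: u) ++ y :: E) ++ B ++ (D ++ (x :: u) ++ y :: E) ++ C =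
      (A ++ D) ++ (x :: u) ++ y :: ((E ++ B ++ D) ++ (x :: u) ++ y :: (E ++ C)) := by simp
  rw [e, key, ← List.cons_append, ← List.cons_append, key] at h
  simp [List.nodup_append] at h

end Segments

section Expansion

variable {α : Type}

/-- The rules of `G`, read through the expansion `e` of its nonterminals, spell the word `W` in
the start rule, and no other rule and no symbol expands to a word with more than `2` letters
satisfying `p`. -/
structure ExpandsTo (p : RSym α → Bool) (W : List (RSym α)) (e : RSym α → List (RSym α))
    (G : Grammar α) : Prop where
  start : ∃ r G', G = r :: G' ∧ r.flatMap e = W ∧ ∀ r' ∈ G', (r'.flatMap e).countP p ≤ 2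
  symbol : ∀ s, (e s).countP p ≤ 2
  fresh : ∀ r ∈ G, ∀ i, Sum.inl i ∈ r → i < G.length

lemma ExpandsTo.countP_le {p : RSym α → Bool} {W : List (RSym α)} {e : RSym α → List (RSym α)}
    {G : Grammar α} (h : ExpandsTo p W e G) : W.countP p ≤ 2 * gramSize G := by
  obtain ⟨r, G', rfl, rfl, -⟩ := h.start
  have : (r.flatMap e).countP p ≤ 2 * r.length := by
    have hs := h.symbol
    clear h
    induction r with
    | nil => simp
    | cons s r ih =>
      have := hs s
      simp only [List.flatMap_cons, List.countP_append, List.length_cons]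
      omega
  simp only [gramSize, List.map_cons, List.sum_cons]
  omega

lemma ExpandsTo.step [DecidableEq α] {p : RSym α → Bool} {W : List (RSym α)}
    {e : RSym α → List (RSym α)} {G G' : Grammar α} (hW : (segments p W).Nodup) (h : ExpandsTo p W e G)
    (hstep : RePairStep G G') : ∃ e', ExpandsTo p W e' G' := by
  obtain ⟨γ, hγ, -, rfl⟩ := hstep
  have hne := hγ.ne_nil
  obtain ⟨r, G', rfl, hr, hG'⟩ := h.start
  have hcount : (γ.flatMap e).countP p ≤ 2 := by
    by_cases h2 : 2 ≤ countNO γ r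
    · obtain ⟨A, B, C, rfl⟩ := exists_append_of_two_le_countNO hne h2
      rw [← hr] at hW
      simp only [List.flatMap_append] at hW
      exact (countP_le_one_of_nodup_segments hW).trans (by norm_num)
    · have hpos : 0 < freq G' γ := by
        have := hγ.2.1
        rw [freq_cons] at this
        omega
      obtain ⟨r', hr', hpos'⟩ : ∃ r' ∈ G', 1 ≤ countNO γ r' := by
        by_contra! hcon
        have : freq G' γ = 0 := by
          rw [freq, List.sum_eq_zero_iff]
          simp only [List.mem_map]
          rintro _ ⟨r', hr', rfl⟩
          exact Nat.lt_one_iff.1 (hcon r' hr')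
        omega
      obtain ⟨A, B, rfl, -⟩ := exists_append_of_countNO_pos hne hpos'
      have := hG' _ hr'
      simp only [List.flatMap_append, List.countP_append] at this
      omega
  set X : RSym α := Sum.inl (r :: G').length with hX
  set e' := Function.update e X (γ.flatMap e) with he'
  have hfresh : ∀ r' ∈ r :: G', ∀ s ∈ r', e' s = e s := by
    intro r' hr' s hs
    rw [he', Function.update_of_ne]
    rintro rfl
    exact (h.fresh r' hr' _ hs).false
  have hexp : ∀ r' ∈ r :: G', (replaceNO γ X r').flatMap e' = r'.flatMap e := fun r' hr' =>
    flatMap_replaceNO hne (by simp [he']) (hfresh r' hr')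
  have hinf : ∃ r' ∈ r :: G', ∀ s ∈ γ, s ∈ r' := by
    by_contra! hcon
    have : freq (r :: G') γ = 0 := by
      rw [freq, List.sum_eq_zero_iff]
      simp only [List.mem_map]
      rintro _ ⟨r', hr', rfl⟩
      by_contra h0
      obtain ⟨A, B, rfl, -⟩ := exists_append_of_countNO_pos hne (Nat.one_le_iff_ne_zero.2 h0)
      obtain ⟨s, hs, hs'⟩ := hcon _ hr'
      simp [hs] at hs'
    have := hγ.2.1
    omega
  obtain ⟨r₁, hr₁, hsub⟩ := hinf
  refine ⟨e', ⟨replaceNO γ X r, G'.map (fun r => replaceNO γ X r) ++ [γ], by simp,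
    (hexp r List.mem_cons_self).trans hr, ?_⟩, ?_, ?_⟩
  · intro r' hr'
    simp only [List.mem_append, List.mem_map, List.mem_singleton] at hr'
    rcases hr' with ⟨r', hr', rfl⟩ | rfl
    · rw [hexp r' (List.mem_cons_of_mem _ hr')]
      exact hG' r' hr'
    · rw [List.flatMap_congr (fun s hs => hfresh r₁ hr₁ s (hsub s hs))]
      exact hcount
  · intro s
    by_cases hs : s = X
    · subst hs
      simpa [he'] using hcount
    · rw [he', Function.update_of_ne hs]
      exact h.symbol s
  · intro r' hr' i hi
    simp only [List.mem_append, List.mem_map, List.mem_singleton] at hr'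
    rw [List.length_append, List.length_map, List.length_singleton]
    rcases hr' with ⟨r', hr', rfl⟩ | rfl
    · rcases mem_replaceNO hne hi with h1 | h1
      · rw [hX] at h1
        have := Sum.inl_injective h1
        omega
      · have := h.fresh r' hr' i h1
        omega
    · have := h.fresh r₁ hr₁ i (hsub _ hi)
      omega

end Expansion

section Halving

/-- The symbol that derives `2 ^ l` copies of the letter `0` once RePair has introduced the
nonterminals `1, ..., l` by repeatedly pairing equal neighbours. -/
def powSym (l : ℕ) : RSym (Fin 2) := if l = 0 then Sum.inr 0 else Sum.inl l

lemma powSym_injective : Function.Injective powSym := by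
  intro a b h
  unfold powSym at h
  split_ifs at h with h1 h2 <;> simp_all

lemma powSym_ne_sep (l : ℕ) : powSym l ≠ Sum.inr 1 := by
  unfold powSym
  split_ifs <;> simp

/-- The symbols for the binary digits of `m` at positions below `j`, most significant first. -/
def lowSyms : ℕ → ℕ → List (RSym (Fin 2))
  | 0, _ => []
  | j + 1, m => (if m.testBit j then [powSym j] else []) ++ lowSyms j m

lemma mem_lowSyms {j m : ℕ} {s : RSym (Fin 2)} (h : s ∈ lowSyms j m) :
    ∃ l < j, s = powSym l := by
  induction j with
  | zero => simp [lowSyms] at h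
  | succ j ih =>
    rw [lowSyms, List.mem_append] at h
    rcases h with h | h
    · split_ifs at h
      · exact ⟨j, by omega, by simpa using h⟩
      · simp at h
    · obtain ⟨l, hl, rfl⟩ := ih h
      exact ⟨l, by omega, rfl⟩

lemma powSym_not_mem_lowSyms (j m : ℕ) : powSym j ∉ lowSyms j m := by
  intro h
  obtain ⟨l, hl, h⟩ := mem_lowSyms h
  exact hl.ne' (powSym_injective h)

lemma length_lowSyms_le (j m : ℕ) : (lowSyms j m).length ≤ j := by
  induction j with
  | zero => simp [lowSyms]
  | succ j ih =>
    rw [lowSyms, List.length_append]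
    split_ifs <;> simp <;> omega

/-- The block `0 ^ m` after `j` rounds of pairing equal neighbours. -/
def halvedBlock (j m : ℕ) : List (RSym (Fin 2)) :=
  List.replicate (m / 2 ^ j) (powSym j) ++ lowSyms j m

/-- The word `0 ^ m₁ 1 0 ^ m₂ 1 ...` after `j` rounds of pairing equal neighbours. -/
def halvedWord (ms : List ℕ) (j : ℕ) : List (RSym (Fin 2)) :=
  ms.flatMap (fun m => halvedBlock j m ++ [Sum.inr 1])

/-- RePair's grammar after `j` rounds of pairing equal neighbours. -/
def halvedGrammar (ms : List ℕ) (j : ℕ) : Grammar (Fin 2) :=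
  halvedWord ms j :: (List.range j).map (fun l => [powSym l, powSym l])

/-- The word `0 ^ m₁ 1 0 ^ m₂ 1 ...`. -/
def blockWord (ms : List ℕ) : List (Fin 2) := ms.flatMap (fun m => List.replicate m 0 ++ [1])

lemma rePairInit_blockWord (ms : List ℕ) : RePairInit (blockWord ms) = halvedGrammar ms 0 := by
  simp [RePairInit, halvedGrammar, halvedWord, halvedBlock, blockWord, List.map_flatMap, lowSyms,
    powSym]

lemma replaceNO_halvedBlock (j m : ℕ) :
    replaceNO [powSym j, powSym j] (powSym (j + 1)) (halvedBlock j m) =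
      halvedBlock (j + 1) m := by
  rw [halvedBlock, replaceNO_pair_replicate_append _ _ (powSym_not_mem_lowSyms j m), halvedBlock,
    lowSyms, Nat.testBit_eq_decide_div_mod_eq, Nat.div_div_eq_div_mul, ← pow_succ,
    List.append_assoc]
  rcases Nat.mod_two_eq_zero_or_one (m / 2 ^ j) with h | h <;> simp [h]

lemma replaceNO_halvedWord (ms : List ℕ) (j : ℕ) :
    replaceNO [powSym j, powSym j] (powSym (j + 1)) (halvedWord ms j) =
      halvedWord ms (j + 1) := by
  induction ms with
  | nil => rfl
  | cons m ms ih =>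
    simp only [halvedWord, List.flatMap_cons, List.append_assoc, List.singleton_append] at ih ⊢
    rw [replaceNO_pair_append _ (powSym_ne_sep j).symm, replaceNO_halvedBlock, ih]

lemma halvedGrammar_succ (ms : List ℕ) (j : ℕ) :
    (halvedGrammar ms j).map
        (replaceNO [powSym j, powSym j] (Sum.inl (halvedGrammar ms j).length)) ++
      [[powSym j, powSym j]] = halvedGrammar ms (j + 1) := by
  have hX : (Sum.inl (halvedGrammar ms j).length : RSym (Fin 2)) = powSym (j + 1) := by
    simp [halvedGrammar, powSym]
  rw [hX, halvedGrammar, List.map_cons, replaceNO_halvedWord, halvedGrammar, List.range_succ,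
    List.map_append, List.cons_append, List.map_map]
  congr 2
  refine List.map_congr_left fun l hl => ?_
  have hl : l < j := by simpa using hl
  refine replaceNO_of_not_mem (y := powSym j) _ (by simp) ?_
  simpa using fun h => hl.ne' (powSym_injective h)

lemma countP_halvedWord_powSym (ms : List ℕ) (j : ℕ) :
    (halvedWord ms j).countP (· = powSym j) = (ms.map (· / 2 ^ j)).sum := by
  induction ms with
  | nil => rfl
  | cons m ms ih =>
    have h0 : (lowSyms j m).countP (· = powSym j) = 0 := by
      rw [List.countP_eq_zero]
      intro s hs
      rw [decide_eq_true_eq]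
      rintro rfl
      exact powSym_not_mem_lowSyms j m hs
    simp only [halvedWord, List.flatMap_cons, List.countP_append, List.map_cons,
      List.sum_cons] at ih ⊢
    rw [ih, halvedBlock, List.countP_append, h0, List.countP_replicate]
    simp [(powSym_ne_sep j).symm]

lemma countP_halvedWord_le (ms : List ℕ) (j : ℕ) :
    (halvedWord ms j).countP (· ≠ powSym j) ≤ ms.length * (j + 1) := by
  induction ms with
  | nil => simp [halvedWord]
  | cons m ms ih =>
    have h0 : (lowSyms j m).countP (· ≠ powSym j) ≤ j :=
      List.countP_le_length.trans (length_lowSyms_le j m)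
    have h1 : ([Sum.inr 1] : List (RSym (Fin 2))).countP (· ≠ powSym j) ≤ 1 :=
      List.countP_le_length
    simp only [halvedWord, List.flatMap_cons, List.countP_append, List.length_cons] at ih ⊢
    rw [halvedBlock, List.countP_append, List.countP_replicate, if_neg (by simp), add_mul]
    omega

lemma countP_flatten_pairs_le (p : RSym (Fin 2) → Bool) (j : ℕ) :
    ((List.range j).map (fun l => [powSym l, powSym l])).flatten.countP p ≤ 2 * j := by
  refine List.countP_le_length.trans ?_
  simp [List.length_flatten, Function.comp_def, mul_comm]

lemma countP_flatten_pairs_powSym (j : ℕ) :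
    ((List.range j).map (fun l => [powSym l, powSym l])).flatten.countP (· = powSym j) = 0 := by
  rw [List.countP_eq_zero]
  intro s hs
  simp only [List.mem_flatten, List.mem_map, List.mem_range] at hs
  obtain ⟨_, ⟨l, hl, rfl⟩, hs⟩ := hs
  have hs : s = powSym l := by simpa using hs
  simpa [hs] using fun h => hl.ne (powSym_injective h)

lemma le_freq_halvedGrammar (m : ℕ) (ms : List ℕ) (j : ℕ) :
    m / 2 ^ j / 2 ≤ freq (halvedGrammar (m :: ms) j) [powSym j, powSym j] := by
  rw [halvedGrammar, freq_cons, halvedWord, List.flatMap_cons, halvedBlock, List.append_assoc,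
    List.append_assoc]
  exact (le_countNO_pair_replicate_append _ _ _).trans (Nat.le_add_right _ _)

lemma freq_halvedGrammar_lt {m : ℕ} {ms : List ℕ} {j : ℕ}
    (h₁ : (ms.length + 1) * (j + 1) + 2 * j < m / 2 ^ j / 2)
    (h₂ : m / 2 ^ j + (ms.map (· / 2 ^ j)).sum < 3 * (m / 2 ^ j / 2))
    {δ : List (RSym (Fin 2))} (hδ : 2 ≤ δ.length) (hne : δ ≠ [powSym j, powSym j]) :
    freq (halvedGrammar (m :: ms) j) δ <
      freq (halvedGrammar (m :: ms) j) [powSym j, powSym j] := by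
  refine lt_of_lt_of_le ?_ (le_freq_halvedGrammar m ms j)
  have hnil : δ ≠ [] := by rintro rfl; simp at hδ
  by_cases hall : ∀ s ∈ δ, s = powSym j
  · have hrep := List.eq_replicate_of_mem hall
    have h3 : 3 ≤ δ.length := by
      by_contra! h3
      have : δ.length = 2 := by omega
      rw [this] at hrep
      exact hne hrep
    have hc : δ.countP (· = powSym j) = δ.length := by
      rw [List.countP_eq_length]
      simpa using hall
    have := freq_mul_countP_le hnil (· = powSym j) (halvedGrammar (m :: ms) j)
    rw [hc, halvedGrammar, List.flatten_cons, List.countP_append, countP_halvedWord_powSym,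
      countP_flatten_pairs_powSym, List.map_cons, List.sum_cons, ← halvedGrammar] at this
    nlinarith
  · have hc : 1 ≤ δ.countP (· ≠ powSym j) := by
      rw [Nat.one_le_iff_ne_zero, Ne, List.countP_eq_zero]
      simpa using hall
    have := freq_mul_countP_le hnil (· ≠ powSym j) (halvedGrammar (m :: ms) j)
    rw [halvedGrammar, List.flatten_cons, List.countP_append, ← halvedGrammar] at this
    have h4 := countP_halvedWord_le (m :: ms) j
    have h5 := countP_flatten_pairs_le (· ≠ powSym j) j
    rw [List.length_cons] at h4
    nlinarith

end Halving

section Digits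

lemma flatten_flatMap {σ τ : Type} (l : List σ) (f : σ → List (List τ)) :
    (l.flatMap f).flatten = l.flatMap (fun x => (f x).flatten) := by
  induction l with
  | nil => rfl
  | cons x l ih => rw [List.flatMap_cons, List.flatten_append, ih, List.flatMap_cons]

/-- The number whose expansion in base `2 ^ P` consists of `Q` digits `1`. -/
def repunit (P : ℕ) : ℕ → ℕ
  | 0 => 0
  | Q + 1 => 2 ^ (P * Q) + repunit P Q

lemma mul_repunit_lt {P i : ℕ} (hi : i < 2 ^ P) (Q : ℕ) : i * repunit P Q < 2 ^ (P * Q) := by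
  induction Q with
  | zero => simp [repunit]
  | succ Q ih =>
    calc i * repunit P (Q + 1) = i * 2 ^ (P * Q) + i * repunit P Q := by rw [repunit, mul_add]
      _ < (i + 1) * 2 ^ (P * Q) := by linarith
      _ ≤ 2 ^ P * 2 ^ (P * Q) := Nat.mul_le_mul_right _ hi
      _ = 2 ^ (P * (Q + 1)) := by rw [← pow_add]; ring_nf

lemma testBit_mul_repunit {P i : ℕ} (hi : i < 2 ^ P) {Q g t : ℕ} (hg : g < Q) (ht : t < P) :
    (i * repunit P Q).testBit (P * g + t) = i.testBit t := by
  induction Q with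
  | zero => omega
  | succ Q ih =>
    rw [repunit, mul_add, mul_comm i, Nat.testBit_two_pow_mul_add _ (mul_repunit_lt hi Q)]
    rcases Nat.lt_succ_iff_lt_or_eq.1 hg with hg | rfl
    · have : P * g + t < P * Q := by
        calc P * g + t < P * (g + 1) := by rw [mul_add]; omega
          _ ≤ P * Q := Nat.mul_le_mul_left _ hg
      rw [if_pos this, ih hg]
    · simp

/-- The symbols for the binary digits of `i` at positions below `d`, shifted by `c`. -/
def groupSyms (c i : ℕ) : ℕ → List (RSym (Fin 2))
  | 0 => []
  | d + 1 => (if i.testBit d then [powSym (c + d)] else []) ++ groupSyms c i d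

lemma lowSyms_add {c d m i : ℕ} (h : ∀ t < d, m.testBit (c + t) = i.testBit t) :
    lowSyms (c + d) m = groupSyms c i d ++ lowSyms c m := by
  induction d with
  | zero => rfl
  | succ d ih =>
    rw [← add_assoc, lowSyms, groupSyms, h d (by omega), ih (fun t ht => h t (by omega)),
      List.append_assoc]

lemma mem_groupSyms {c i d : ℕ} {s : RSym (Fin 2)} :
    s ∈ groupSyms c i d ↔ ∃ t < d, i.testBit t ∧ s = powSym (c + t) := by
  induction d with
  | zero => simp [groupSyms]
  | succ d ih =>
    rw [groupSyms, List.mem_append, ih]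
    constructor
    · rintro (h | ⟨t, ht, h⟩)
      · split_ifs at h with hd
        · exact ⟨d, by omega, hd, by simpa using h⟩
        · simp at h
      · exact ⟨t, by omega, h⟩
    · rintro ⟨t, ht, h1, rfl⟩
      rcases Nat.lt_succ_iff_lt_or_eq.1 ht with ht | rfl
      · exact Or.inr ⟨t, ht, h1, rfl⟩
      · simp [h1]

/-- The symbols for the `g`-th base `2 ^ P` digit `i` of a multiple of a repunit, with the
separator attached to the last digit. -/
def digitSyms (P i g : ℕ) : List (RSym (Fin 2)) :=
  groupSyms (P * g) i P ++ if g = 0 then [Sum.inr 1] else []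

lemma lowSyms_append_sep {P i m Q : ℕ}
    (h : ∀ g < Q + 1, ∀ t < P, m.testBit (P * g + t) = i.testBit t) :
    lowSyms (P * (Q + 1)) m ++ [Sum.inr 1] =
      ((List.range (Q + 1)).reverse.map (digitSyms P i)).flatten := by
  induction Q with
  | zero =>
    rw [mul_add, mul_one, lowSyms_add (h 0 (by omega))]
    simp [digitSyms, lowSyms]
  | succ Q ih =>
    rw [mul_add P (Q + 1), mul_one, lowSyms_add (h (Q + 1) (by omega)), List.append_assoc,
      ih (fun g hg => h g (by omega)), List.range_succ (n := Q + 1)]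
    simp [digitSyms]

/-- Whether a symbol stands for the most significant bit of a base `2 ^ P` digit. -/
def isLeader (P : ℕ) : RSym (Fin 2) → Bool
  | Sum.inl l => l % P = P - 1
  | Sum.inr _ => false

lemma isLeader_powSym {P : ℕ} (hP : 2 ≤ P) (l : ℕ) :
    isLeader P (powSym l) = decide (l % P = P - 1) := by
  unfold powSym
  split_ifs with h
  · subst h
    exact (decide_eq_false (by rw [Nat.zero_mod]; omega)).symm
  · rfl

lemma isLeader_of_mem_groupSyms {p c i d g : ℕ} (hp : 1 ≤ p) (hd : d ≤ p)
    (hc : c = (p + 1) * g) {s : RSym (Fin 2)} (hs : s ∈ groupSyms c i d) :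
    isLeader (p + 1) s = false := by
  obtain ⟨t, ht, -, rfl⟩ := mem_groupSyms.1 hs
  rw [isLeader_powSym (by omega), hc, Nat.mul_add_mod, Nat.mod_eq_of_lt (by omega)]
  rw [decide_eq_false_iff_not]
  omega

lemma digitSyms_eq_cons {p i : ℕ} (hi : 2 ^ p ≤ i) (hi' : i < 2 ^ (p + 1)) (g : ℕ) :
    digitSyms (p + 1) i g = powSym ((p + 1) * g + p) ::
      (groupSyms ((p + 1) * g) i p ++ if g = 0 then [Sum.inr 1] else []) := by
  have : i.testBit p = true := by
    rw [Nat.testBit_eq_decide_div_mod_eq]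
    have h1 : i / 2 ^ p = 1 :=
      Nat.div_eq_of_lt_le (by omega) (by rw [pow_succ] at hi'; omega)
    simp [h1]
  simp [digitSyms, groupSyms, this]

lemma exists_digitSyms_eq {p i : ℕ} (hp : 1 ≤ p) (hi : 2 ^ p ≤ i) (hi' : i < 2 ^ (p + 1))
    (g : ℕ) : ∃ x u, digitSyms (p + 1) i g = x :: u ∧ isLeader (p + 1) x ∧
      ∀ y ∈ u, isLeader (p + 1) y = false := by
  refine ⟨_, _, digitSyms_eq_cons hi hi' g, ?_, ?_⟩
  · rw [isLeader_powSym (by omega), Nat.mul_add_mod, Nat.mod_eq_of_lt (by omega)]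
    simp
  · intro y hy
    rcases List.mem_append.1 hy with hy | hy
    · exact isLeader_of_mem_groupSyms hp le_rfl rfl hy
    · split_ifs at hy
      · obtain rfl : y = Sum.inr 1 := by simpa using hy
        rfl
      · simp at hy

lemma digitSyms_injective {p i i' g g' : ℕ} (hi : 2 ^ p ≤ i) (hi' : i < 2 ^ (p + 1))
    (hj : 2 ^ p ≤ i') (hj' : i' < 2 ^ (p + 1))
    (h : digitSyms (p + 1) i g = digitSyms (p + 1) i' g') : i = i' ∧ g = g' := by
  have hg : g = g' := by
    have h := h
    rw [digitSyms_eq_cons hi hi', digitSyms_eq_cons hj hj', List.cons.injEq] at h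
    have := powSym_injective h.1
    exact Nat.eq_of_mul_eq_mul_left p.add_one_pos (by omega)
  refine ⟨?_, hg⟩
  subst hg
  have hmem : ∀ i t, t < p + 1 →
      (powSym ((p + 1) * g + t) ∈ digitSyms (p + 1) i g ↔ i.testBit t) := by
    intro i t ht
    rw [digitSyms, List.mem_append, mem_groupSyms]
    constructor
    · rintro (⟨t', -, h1, h2⟩ | h1)
      · have := powSym_injective h2
        rwa [show t = t' by omega]
      · split_ifs at h1
        · exact absurd (by simpa using h1) (powSym_ne_sep _)
        · simp at h1
    · exact fun h1 => Or.inl ⟨t, ht, h1, rfl⟩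
  refine Nat.eq_of_testBit_eq fun t => ?_
  by_cases ht : t < p + 1
  · rw [Bool.eq_iff_iff, ← hmem i t ht, ← hmem i' t ht, h]
  · have hle : 2 ^ (p + 1) ≤ 2 ^ t := Nat.pow_le_pow_right (by norm_num) (by omega)
    rw [Nat.testBit_lt_two_pow (hi'.trans_le hle), Nat.testBit_lt_two_pow (hj'.trans_le hle)]

/-- The block lengths `i * repunit P Q` for the numbers `i` with exactly `P = p + 1` bits. -/
def digitBlocks (p Q : ℕ) : List ℕ :=
  (List.range (2 ^ p)).map (fun t => (2 ^ p + t) * repunit (p + 1) Q)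

lemma two_pow_add_lt {p t : ℕ} (ht : t < 2 ^ p) : 2 ^ p + t < 2 ^ (p + 1) := by
  rw [pow_succ]
  omega

lemma lt_of_mem_digitBlocks {p Q m : ℕ} (h : m ∈ digitBlocks p Q) : m < 2 ^ ((p + 1) * Q) := by
  simp only [digitBlocks, List.mem_map, List.mem_range] at h
  obtain ⟨t, ht, rfl⟩ := h
  exact mul_repunit_lt (two_pow_add_lt ht) Q

lemma halvedWord_digitBlocks {p Q : ℕ} (hQ : 1 ≤ Q) :
    halvedWord (digitBlocks p Q) ((p + 1) * Q) =
      ((List.range (2 ^ p)).flatMap fun t =>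
        (List.range Q).reverse.map (digitSyms (p + 1) (2 ^ p + t))).flatten := by
  obtain ⟨Q, rfl⟩ : ∃ R, Q = R + 1 := ⟨Q - 1, by omega⟩
  rw [halvedWord, digitBlocks, List.flatMap_map, flatten_flatMap]
  refine List.flatMap_congr fun t ht => ?_
  have ht : 2 ^ p + t < 2 ^ (p + 1) := two_pow_add_lt (by simpa using ht)
  rw [← lowSyms_append_sep (fun g hg u hu => testBit_mul_repunit ht hg hu), halvedBlock,
    Nat.div_eq_of_lt (mul_repunit_lt ht _)]
  simp

lemma halvedBlock_two_pow {j n : ℕ} (h : j ≤ n) :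
    halvedBlock j (2 ^ n) = List.replicate (2 ^ n / 2 ^ j) (powSym j) := by
  have : lowSyms j (2 ^ n) = [] := by
    induction j with
    | zero => rfl
    | succ j ih =>
      rw [lowSyms, ih (by omega), Nat.testBit_two_pow]
      simp
      omega
  rw [halvedBlock, this, List.append_nil]

lemma segments_halvedWord {p Q n : ℕ} (hp : 1 ≤ p) (hQ : 1 ≤ Q) (hn : (p + 1) * Q ≤ n) :
    segments (isLeader (p + 1)) (halvedWord (2 ^ n :: digitBlocks p Q) ((p + 1) * Q)) =
      (List.range (2 ^ p)).flatMap fun t =>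
        (List.range Q).reverse.map (digitSyms (p + 1) (2 ^ p + t)) := by
  have h := halvedWord_digitBlocks (p := p) hQ
  unfold halvedWord at h ⊢
  rw [List.flatMap_cons, h, segments_append_of_forall, segments_flatten]
  · simp only [List.mem_flatMap, List.mem_map, List.mem_range]
    rintro _ ⟨t, ht, g, -, rfl⟩
    exact exists_digitSyms_eq hp (by omega) (two_pow_add_lt ht) g
  · intro x hx
    rw [halvedBlock_two_pow hn, List.mem_append, List.mem_replicate, List.mem_singleton] at hx
    rcases hx with ⟨-, rfl⟩ | rfl
    · rw [isLeader_powSym (by omega), Nat.mul_mod_right]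
      simp
      omega
    · rfl

lemma nodup_segments_halvedWord {p Q n : ℕ} (hp : 1 ≤ p) (hQ : 1 ≤ Q)
    (hn : (p + 1) * Q ≤ n) :
    (segments (isLeader (p + 1))
      (halvedWord (2 ^ n :: digitBlocks p Q) ((p + 1) * Q))).Nodup := by
  rw [segments_halvedWord hp hQ hn, List.nodup_flatMap]
  constructor
  · intro t ht
    have ht := two_pow_add_lt (List.mem_range.1 ht)
    refine List.Nodup.map ?_ (List.nodup_reverse.2 List.nodup_range)
    exact fun g g' h => (digitSyms_injective (by omega) ht (by omega) ht h).2
  · refine List.nodup_range.imp_of_mem ?_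
    intro t t' ht ht' hne
    have ht := two_pow_add_lt (List.mem_range.1 ht)
    have ht' := two_pow_add_lt (List.mem_range.1 ht')
    rw [Function.onFun, List.disjoint_left]
    simp only [List.mem_map]
    rintro _ ⟨g, -, rfl⟩ ⟨g', -, h⟩
    have := (digitSyms_injective (by omega) ht' (by omega) ht h).1
    omega

lemma countP_halvedWord_isLeader {p Q n : ℕ} (hp : 1 ≤ p) (hQ : 1 ≤ Q)
    (hn : (p + 1) * Q ≤ n) :
    (halvedWord (2 ^ n :: digitBlocks p Q) ((p + 1) * Q)).countP (isLeader (p + 1)) =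
      2 ^ p * Q := by
  rw [← length_segments, segments_halvedWord hp hQ hn]
  simp [List.length_flatMap]

end Digits

section StraightLine

variable {α : Type}

lemma SLP.val_eq_s10 (G : SLP α) (i : Fin G.n) :
    G.val i = (G.rhs i).flatMap (Sum.elim G.val (fun a => [a])) := by
  rw [SLP.val, List.flatMap_def]
  congr 1
  conv_rhs => rw [← List.attach_map_subtype_val (G.rhs i), List.map_map]
  refine List.map_congr_left fun s _ => ?_
  rcases s with ⟨j | a, hs⟩ <;> rfl

lemma SLP.val_with_start (G : SLP α) (i j : Fin G.n) :
    SLP.val { G with start := i } j = G.val j := by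
  induction hj : (j : ℕ) using Nat.strong_induction_on generalizing j with
  | _ m ih =>
    subst hj
    rw [SLP.val_eq_s10, SLP.val_eq_s10]
    refine List.flatMap_congr fun s hs => ?_
    rcases s with l | a
    · exact ih l (G.dec j l hs) l rfl
    · rfl

/-- The extension of an SLP by one more rule, whose nonterminal becomes the start symbol. -/
@[reducible]
def SLP.extend (G : SLP α) (r : List (Fin G.n ⊕ α)) (hr : r ≠ []) : SLP α where
  n := G.n + 1
  rhs := Fin.lastCases (r.map (Sum.map Fin.castSucc id))
    (fun i => (G.rhs i).map (Sum.map Fin.castSucc id))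
  start := Fin.last _
  dec := by
    intro i j h
    induction i using Fin.lastCases with
    | last =>
      simp only [Fin.lastCases_last, List.mem_map] at h
      obtain ⟨s | a, hs, h⟩ := h
      · simp only [Sum.map_inl, Sum.inl.injEq] at h
        subst h
        simp
      · simp at h
    | cast i =>
      simp only [Fin.lastCases_castSucc, List.mem_map] at h
      obtain ⟨s | a, hs, h⟩ := h
      · simp only [Sum.map_inl, Sum.inl.injEq] at h
        subst h
        simpa using G.dec i s hs
      · simp at h
  ne := by
    intro i
    induction i using Fin.lastCases with
    | last => simpa using hr
    | cast i => simpa using G.ne i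

lemma SLP.size_extend (G : SLP α) (r : List (Fin G.n ⊕ α)) (hr : r ≠ []) :
    (G.extend r hr).size = G.size + r.length := by
  unfold SLP.size
  exact (Fin.sum_univ_castSucc (n := G.n) _).trans (by simp [SLP.extend])

lemma SLP.val_extend_castSucc (G : SLP α) (r : List (Fin G.n ⊕ α)) (hr : r ≠ [])
    (i : Fin G.n) : (G.extend r hr).val (Fin.castSucc i) = G.val i := by
  induction hi : (i : ℕ) using Nat.strong_induction_on generalizing i with
  | _ m ih =>
    subst hi
    have h : (G.extend r hr).rhs (Fin.castSucc i) =
        (G.rhs i).map (Sum.map Fin.castSucc id) := by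
      simp [SLP.extend]
    rw [SLP.val_eq_s10, SLP.val_eq_s10, h, List.flatMap_map]
    refine List.flatMap_congr fun s hs => ?_
    rcases s with j | a
    · exact ih j (G.dec i j hs) j rfl
    · rfl

lemma SLP.val_extend_last (G : SLP α) (r : List (Fin G.n ⊕ α)) (hr : r ≠ []) :
    (G.extend r hr).val (Fin.last G.n) = r.flatMap (Sum.elim G.val (fun a => [a])) := by
  have h : (G.extend r hr).rhs (Fin.last G.n) = r.map (Sum.map Fin.castSucc id) := by
    simp [SLP.extend]
  rw [SLP.val_eq_s10, h, List.flatMap_map]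
  refine List.flatMap_congr fun s hs => ?_
  rcases s with j | a
  · exact G.val_extend_castSucc r hr j
  · rfl

/-- Some SLP of size at most `n` has a nonterminal for each word of `S`. -/
def DerivableWithin (S : Set (List α)) (n : ℕ) : Prop :=
  ∃ G : SLP α, G.size ≤ n ∧ ∀ w ∈ S, ∃ i, G.val i = w

lemma derivableWithin_letter (a : α) : DerivableWithin {[a]} 1 := by
  refine ⟨⟨1, fun _ => [Sum.inr a], 0, by simp, by simp⟩, by simp [SLP.size], ?_⟩
  rintro _ rfl
  exact ⟨0, by simp [SLP.val_eq_s10]⟩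

lemma DerivableWithin.mono {S T : Set (List α)} {m n : ℕ} (h : DerivableWithin S m)
    (hT : T ⊆ S) (hn : m ≤ n) : DerivableWithin T n := by
  obtain ⟨G, h1, h2⟩ := h
  exact ⟨G, h1.trans hn, fun w hw => h2 w (hT hw)⟩

lemma DerivableWithin.gsize_le {S : Set (List α)} {n : ℕ} (h : DerivableWithin S n)
    {w : List α} (hw : w ∈ S) : gsize w ≤ n := by
  obtain ⟨G, h1, h2⟩ := h
  obtain ⟨i, hi⟩ := h2 w hw
  have hmem : G.size ∈ {s | ∃ G : SLP α, G.produces w ∧ G.size = s} :=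
    ⟨{ G with start := i }, (G.val_with_start i i).trans hi, rfl⟩
  exact (Nat.sInf_le hmem).trans h1

/-- A word that is a concatenation of `ps.length` derivable words can be added at that cost. -/
lemma DerivableWithin.insert_flatten {S : Set (List α)} {n : ℕ} (h : DerivableWithin S n)
    {ps : List (List α)} (hne : ps ≠ []) (hps : ∀ w ∈ ps, w ∈ S ∨ ∃ a, w = [a]) :
    DerivableWithin (insert ps.flatten S) (n + ps.length) := by
  obtain ⟨G, h1, h2⟩ := h
  have hsym : ∀ w ∈ ps, ∃ s : Fin G.n ⊕ α, Sum.elim G.val (fun a => [a]) s = w := by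
    intro w hw
    rcases hps w hw with hw | ⟨a, rfl⟩
    · obtain ⟨i, hi⟩ := h2 w hw
      exact ⟨Sum.inl i, hi⟩
    · exact ⟨Sum.inr a, rfl⟩
  obtain ⟨r, hr⟩ : ∃ r : List (Fin G.n ⊕ α), r.map (Sum.elim G.val (fun a => [a])) = ps := by
    clear hne hps
    induction ps with
    | nil => exact ⟨[], rfl⟩
    | cons w ps ih =>
      obtain ⟨r, hr⟩ := ih (fun w hw => hsym w (List.mem_cons_of_mem _ hw))
      obtain ⟨s, hs⟩ := hsym w List.mem_cons_self
      exact ⟨s :: r, by rw [List.map_cons, hr, hs]⟩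
  have hrne : r ≠ [] := by
    rintro rfl
    exact hne hr.symm
  refine ⟨G.extend r hrne, ?_, ?_⟩
  · rw [SLP.size_extend, ← hr, List.length_map]
    omega
  · rintro w (rfl | hw)
    · exact ⟨Fin.last _, by rw [SLP.val_extend_last, List.flatMap_def, hr]⟩
    · obtain ⟨i, hi⟩ := h2 w hw
      exact ⟨Fin.castSucc i, by rw [SLP.val_extend_castSucc, hi]⟩

lemma DerivableWithin.insert_append {S : Set (List α)} {n : ℕ} (h : DerivableWithin S n)
    {u v : List α} (hu : u ∈ S) (hv : v ∈ S) : DerivableWithin (insert (u ++ v) S) (n + 2) := by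
  have := h.insert_flatten (ps := [u, v]) (by simp) (by simp [hu, hv])
  simpa using this

lemma derivableWithin_powers (a : α) (n : ℕ) :
    DerivableWithin {w | ∃ l ≤ n, w = List.replicate (2 ^ l) a} (2 * n + 1) := by
  induction n with
  | zero =>
    refine (derivableWithin_letter a).mono ?_ le_rfl
    rintro _ ⟨l, hl, rfl⟩
    obtain rfl : l = 0 := by omega
    simp
  | succ n ih =>
    have hm : List.replicate (2 ^ n) a ∈ {w | ∃ l ≤ n, w = List.replicate (2 ^ l) a} :=
      ⟨n, le_rfl, rfl⟩
    refine (ih.insert_append hm hm).mono ?_ (by omega)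
    rintro _ ⟨l, hl, rfl⟩
    rcases Nat.lt_succ_iff_lt_or_eq.1 (Nat.lt_succ_of_le hl) with hl | rfl
    · exact Or.inr ⟨l, by omega, rfl⟩
    · left
      rw [← List.replicate_add, pow_succ, mul_two]

lemma DerivableWithin.multiples {S : Set (List α)} {n m : ℕ} {a : α} (h : DerivableWithin S n)
    (hm : List.replicate m a ∈ S) (N : ℕ) :
    DerivableWithin (S ∪ {w | ∃ i, 1 ≤ i ∧ i ≤ N + 1 ∧ w = List.replicate (i * m) a})
      (n + 2 * N) := by
  induction N with
  | zero =>
    refine h.mono ?_ le_rfl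
    rintro w (hw | ⟨i, hi, hi', rfl⟩)
    · exact hw
    · obtain rfl : i = 1 := by omega
      simpa using hm
  | succ N ih =>
    refine (ih.insert_append (u := List.replicate ((N + 1) * m) a) (v := List.replicate m a)
      (Or.inr ⟨N + 1, by omega, le_rfl, rfl⟩) (Or.inl hm)).mono ?_ (by omega)
    rintro w (hw | ⟨i, hi, hi', rfl⟩)
    · exact Or.inr (Or.inl hw)
    · rcases Nat.lt_succ_iff_lt_or_eq.1 (Nat.lt_succ_of_le hi') with hi' | rfl
      · exact Or.inr (Or.inr ⟨i, hi, by omega, rfl⟩)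
      · left
        rw [← List.replicate_add]
        congr 1
        ring

lemma flatten_replicate_repunit (P Q : ℕ) (a : α) :
    ((List.range Q).map (fun g => List.replicate (2 ^ (P * g)) a)).flatten =
      List.replicate (repunit P Q) a := by
  induction Q with
  | zero => simp [repunit]
  | succ Q ih =>
    rw [List.range_succ, List.map_append, List.flatten_append, ih, repunit, add_comm,
      List.replicate_add]
    simp

lemma gsize_blockWord_le {p Q n : ℕ} (hQ : 1 ≤ Q) (hn : (p + 1) * Q ≤ n) :
    gsize (blockWord (2 ^ n :: digitBlocks p Q)) ≤ 2 * n + Q + 6 * 2 ^ p + 3 := by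
  have h1 := (derivableWithin_powers (0 : Fin 2) n).insert_flatten
    (ps := (List.range Q).map (fun g => List.replicate (2 ^ ((p + 1) * g)) 0))
    (by simp; omega) (by
      simp only [List.mem_map, List.mem_range]
      rintro _ ⟨g, hg, rfl⟩
      exact Or.inl ⟨(p + 1) * g, (Nat.mul_le_mul_left _ hg.le).trans hn, rfl⟩)
  rw [flatten_replicate_repunit] at h1
  have h2 := h1.multiples (Set.mem_insert _ _) (2 ^ (p + 1))
  have h3 := h2.insert_flatten
    (ps := (2 ^ n :: digitBlocks p Q).flatMap (fun m => [List.replicate m 0, [1]]))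
    (by simp) (by
      simp only [List.mem_flatMap, List.mem_cons, List.not_mem_nil, or_false]
      rintro w ⟨m, hm, rfl | rfl⟩
      · left
        rcases hm with rfl | hm
        · exact Or.inl (Or.inr ⟨n, le_rfl, rfl⟩)
        · simp only [digitBlocks, List.mem_map, List.mem_range] at hm
          obtain ⟨t, ht, rfl⟩ := hm
          have := two_pow_add_lt ht
          exact Or.inr ⟨2 ^ p + t, by have := Nat.two_pow_pos p; omega, by omega, rfl⟩
      · exact Or.inr ⟨1, rfl⟩)
  have h4 := h3.gsize_le (w := blockWord (2 ^ n :: digitBlocks p Q)) (Or.inl (by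
    rw [blockWord, flatten_flatMap]
    simp))
  refine h4.trans ?_
  have hlen : ((2 ^ n :: digitBlocks p Q).flatMap
      (fun m => [List.replicate m (0 : Fin 2), [1]])).length = 2 + 2 * 2 ^ p := by
    simp [List.length_flatMap, digitBlocks, Function.comp_def]
    omega
  rw [hlen, List.length_map, List.length_range, pow_succ]
  omega

end StraightLine

section LowerBound

lemma expandsTo_halvedGrammar (p : RSym (Fin 2) → Bool) (ms : List ℕ) (J : ℕ) :
    ExpandsTo p (halvedWord ms J) (fun s => [s]) (halvedGrammar ms J) := by
  refine ⟨⟨_, _, rfl, by simp, ?_⟩, ?_, ?_⟩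
  · intro r hr
    simp only [List.mem_map] at hr
    obtain ⟨l, -, rfl⟩ := hr
    exact List.countP_le_length
  · exact fun s => List.countP_le_length.trans (by simp)
  · intro r hr i hi
    have hlen : (halvedGrammar ms J).length = J + 1 := by simp [halvedGrammar]
    obtain ⟨l, hl, h⟩ : ∃ l ≤ J, Sum.inl i = powSym l := by
      simp only [halvedGrammar, List.mem_cons, List.mem_map, List.mem_range] at hr
      rcases hr with rfl | ⟨l, hl, rfl⟩
      · simp only [halvedWord, List.mem_flatMap, halvedBlock, List.mem_append,
          List.mem_replicate, List.mem_singleton] at hi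
        obtain ⟨m, -, (⟨-, h⟩ | h) | h⟩ := hi
        · exact ⟨J, le_rfl, h⟩
        · obtain ⟨l, hl, h⟩ := mem_lowSyms h
          exact ⟨l, hl.le, h⟩
        · simp at h
      · exact ⟨l, hl.le, by simpa using hi⟩
    unfold powSym at h
    split_ifs at h
    have := Sum.inl_injective h
    omega

lemma two_le_freq_halvedGrammar {m : ℕ} {ms : List ℕ} {j : ℕ}
    (h₁ : (ms.length + 1) * (j + 1) + 2 * j < m / 2 ^ j / 2) :
    2 ≤ freq (halvedGrammar (m :: ms) j) [powSym j, powSym j] := by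
  refine le_trans ?_ (le_freq_halvedGrammar m ms j)
  have : 0 < (ms.length + 1) * (j + 1) := by positivity
  omega

/-- If pairing equal neighbours is forced during the first `J` rounds, and the resulting word
has no repeated segment, then every output of RePair is large. -/
lemma RePairRun.countP_le {m : ℕ} {ms : List ℕ} {J : ℕ} (hJ : 0 < J) {p : RSym (Fin 2) → Bool}
    (hnodup : (segments p (halvedWord (m :: ms) J)).Nodup)
    (h₁ : ∀ j < J, (ms.length + 1) * (j + 1) + 2 * j < m / 2 ^ j / 2)
    (h₂ : ∀ j < J, m / 2 ^ j + (ms.map (· / 2 ^ j)).sum < 3 * (m / 2 ^ j / 2))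
    {G : Grammar (Fin 2)} (hG : RePairRun (blockWord (m :: ms)) G) :
    (halvedWord (m :: ms) J).countP p ≤ 2 * gramSize G := by
  obtain ⟨⟨n, hsteps⟩, hterm⟩ := hG
  have key : (∃ j < J, G = halvedGrammar (m :: ms) j) ∨
      ∃ e, ExpandsTo p (halvedWord (m :: ms) J) e G := by
    clear hterm
    rw [rePairInit_blockWord] at hsteps
    generalize hG₀ : halvedGrammar (m :: ms) 0 = G₀ at hsteps
    induction hsteps with
    | refl => exact Or.inl ⟨0, hJ, hG₀.symm⟩
    | tail _ hstep ih =>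
      rcases ih hG₀ with ⟨j, hj, rfl⟩ | ⟨e, he⟩
      · have := hstep.eq_of_freq_lt (by rfl) (two_le_freq_halvedGrammar (h₁ j hj))
          (fun δ hδ hne => freq_halvedGrammar_lt (h₁ j hj) (h₂ j hj) hδ hne)
        rw [halvedGrammar_succ] at this
        rcases Nat.lt_or_ge (j + 1) J with hj' | hj'
        · exact Or.inl ⟨j + 1, hj', this⟩
        · obtain rfl : J = j + 1 := by omega
          exact Or.inr ⟨_, this ▸ expandsTo_halvedGrammar p _ _⟩
      · exact Or.inr (he.step hnodup hstep)
  rcases key with ⟨j, hj, rfl⟩ | ⟨e, he⟩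
  · refine absurd ⟨le_rfl, two_le_freq_halvedGrammar (h₁ j hj), fun δ hδ => ?_⟩
      (hterm [powSym j, powSym j])
    exact freq_halvedGrammar_lt (h₁ j hj) (h₂ j hj) hδ.le (by rintro rfl; exact hδ.false)
  · exact he.countP_le

lemma length_blockWord (ms : List ℕ) : (blockWord ms).length = (ms.map (· + 1)).sum := by
  simp [blockWord, List.length_flatMap]

lemma length_digitBlocks (p Q : ℕ) : (digitBlocks p Q).length = 2 ^ p := by
  simp [digitBlocks]

lemma sq_add_lt_two_pow {k : ℕ} (hk : 100 ≤ k) : k * k + 3 * k < 2 ^ (k - 1) := by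
  induction k, hk using Nat.le_induction with
  | base => norm_num
  | succ k hk ih =>
    have : 2 ^ (k + 1 - 1) = 2 * 2 ^ (k - 1) := by
      rw [← pow_succ']
      congr 1
      omega
    rw [this]
    nlinarith

end LowerBound

/-- `α_RePair(2, n) ∈ Ω(log n / log log n)`: there are binary words `s_k` of length
`n ∈ Θ(4^k)` with `g(s_k) ∈ O(k)` such that every output of RePair on `s_k` has size
`Ω(k² / log k)`. -/
theorem repair_stmt_10 :
    ∃ C : ℕ, 0 < C ∧ ∀ k : ℕ, C ≤ k → ∃ s : List (Fin 2),
      4 ^ k ≤ 2 * s.length ∧ s.length ≤ 2 * 4 ^ k ∧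
      gsize s ≤ C * k ∧
      (∃ G : Grammar (Fin 2), RePairRun s G) ∧
      (∀ G : Grammar (Fin 2), RePairRun s G →
        k ^ 2 ≤ C * gramSize G * Nat.log 2 k) := by
  refine ⟨100, by norm_num, fun k hk => ?_⟩
  obtain ⟨p, hp⟩ : ∃ p, Nat.log 2 k = p + 1 :=
    ⟨Nat.log 2 k - 1, by have := Nat.log_pos one_lt_two (by omega : 2 ≤ k); omega⟩
  have hlo : 2 * 2 ^ p ≤ k := by
    rw [← pow_succ', ← hp]
    exact Nat.pow_log_le_self 2 (by omega)
  have hhi : k < 4 * 2 ^ p := by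
    have := Nat.lt_pow_succ_log_self one_lt_two k
    rw [hp, pow_succ, pow_succ] at this
    omega
  have hp1 : 1 ≤ p := by
    by_contra! h
    obtain rfl : p = 0 := by omega
    omega
  have hpk : p + 1 ≤ k := by
    have := Nat.lt_two_pow_self (n := p)
    omega
  set Q := k / (p + 1)
  have hQ1 : 1 ≤ Q := Nat.div_pos hpk p.add_one_pos
  have hJk : (p + 1) * Q ≤ k := Nat.mul_div_le k (p + 1)
  have hQk : Q ≤ k := Nat.div_le_self _ _
  have hkQ : k < (p + 1) * Q + (p + 1) := Nat.lt_mul_div_succ k p.add_one_pos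
  have hbig := sq_add_lt_two_pow hk
  have hpow : 2 ^ k = 2 * 2 ^ (k - 1) := by
    rw [← pow_succ']
    congr 1
    omega
  have hsq : 4 ^ k = 2 ^ k * 2 ^ k := by rw [← mul_pow]; norm_num
  have hpad : 4 ^ k = 2 ^ (2 * k) := by rw [pow_mul]; norm_num
  have hblock : ∀ m ∈ digitBlocks p Q, m < 2 ^ ((p + 1) * Q) := fun m => lt_of_mem_digitBlocks
  have hJpow : 2 ^ ((p + 1) * Q) ≤ 2 ^ k := Nat.pow_le_pow_right (by norm_num) hJk
  have hdiv : ∀ j < (p + 1) * Q, 2 ^ (2 * k) / 2 ^ j = 2 * (2 ^ (k - 1) * 2 ^ (k - j)) := by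
    intro j hj
    rw [Nat.pow_div (by omega) (by norm_num), ← pow_add, ← pow_succ']
    congr 1
    omega
  have hge : ∀ j < (p + 1) * Q, 2 ≤ 2 ^ (k - j) := fun j hj =>
    Nat.le_self_pow (by omega) 2
  have hlen : (blockWord (2 ^ (2 * k) :: digitBlocks p Q)).length =
      4 ^ k + 1 + ((digitBlocks p Q).map (· + 1)).sum := by
    rw [length_blockWord, List.map_cons, List.sum_cons, hpad]
  refine ⟨blockWord (2 ^ (2 * k) :: digitBlocks p Q), ?_, ?_, ?_, ?_, ?_⟩
  · omega
  · have hsum : ((digitBlocks p Q).map (· + 1)).sum ≤ 2 ^ p * 2 ^ k := by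
      refine (List.sum_le_card_nsmul _ (2 ^ k) ?_).trans_eq ?_
      · simp only [List.mem_map]
        rintro _ ⟨m, hm, rfl⟩
        exact (hblock m hm).trans_le hJpow
      · rw [List.length_map, length_digitBlocks, smul_eq_mul]
    rw [hlen, hsq]
    nlinarith
  · refine (gsize_blockWord_le hQ1 (by omega)).trans ?_
    omega
  · exact exists_rePairRun (by simp [blockWord])
  · intro G hG
    have hN := hG.countP_le (J := (p + 1) * Q) (by positivity)
      (nodup_segments_halvedWord hp1 hQ1 (by omega)) ?_ ?_
    · rw [countP_halvedWord_isLeader hp1 hQ1 (by omega)] at hN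
      rw [hp]
      have h1 : k ≤ 2 * ((p + 1) * Q) := by nlinarith
      calc k ^ 2 = k * k := sq k
        _ ≤ (4 * 2 ^ p) * (2 * ((p + 1) * Q)) := Nat.mul_le_mul hhi.le h1
        _ = 8 * (p + 1) * (2 ^ p * Q) := by ring
        _ ≤ 8 * (p + 1) * (2 * gramSize G) := Nat.mul_le_mul_left _ hN
        _ ≤ 100 * gramSize G * (p + 1) := by nlinarith [Nat.zero_le (gramSize G * (p + 1))]
    · intro j hj
      have := hge j hj
      rw [hdiv j hj, length_digitBlocks, Nat.mul_div_cancel_left _ two_pos]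
      have h1 : (2 ^ p + 1) * (j + 1) ≤ (k + 1) * k := Nat.mul_le_mul (by omega) (by omega)
      nlinarith
    · intro j hj
      rw [hdiv j hj, Nat.mul_div_cancel_left _ two_pos]
      have hsum : ((digitBlocks p Q).map (· / 2 ^ j)).sum ≤ 2 ^ p * 2 ^ (k - j) := by
        refine (List.sum_le_card_nsmul _ (2 ^ (k - j)) ?_).trans_eq ?_
        · simp only [List.mem_map]
          rintro _ ⟨m, hm, rfl⟩
          refine Nat.div_le_of_le_mul ?_
          rw [← pow_add, show j + (k - j) = k by omega]
          exact ((hblock m hm).trans_le hJpow).le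
        · rw [List.length_map, length_digitBlocks, smul_eq_mul]
      have := hge j hj
      have h1 : 2 ^ p < 2 ^ (k - 1) := by nlinarith
      nlinarith
end
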